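/- arXiv:1504.06213 — 2 statements merged into one kernel-verified Lean document; each statement's English description precedes it below -/
import Mathlib

section
/- Let F be a field of characteristic zero and let 0 ≤ μ < 1 be a constant. There exist constants c > 0 and n₀ (depending only on μ) such that for all n ≥ n₀ and every point a ∈ F^N the following holds: if the translated polynomial NW_{n,μ}(X̄ + ā) = ∑_{i=1}^{T} ∏_{j=1}^{d} Q_{ij} where each Q_{ij} ∈ F[X_1,…,X_N] depends on at most N^μ of the variables, then T·d ≥ n^{c·√n}. -/
open MvPolynomial

/-- The parameter `γ` in the definition of the Nisan–Wigderson polynomial,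
with `δ = (1-μ)/2`. -/
noncomputable def nwGamma (μ : ℝ) : ℝ :=
  (2 * (μ + (1 - μ) / 2) + 1) / (1 - (μ + (1 - μ) / 2))

/-- The degree parameter `D` of the Nisan–Wigderson polynomial `NW_{n,μ}`:
`D = ((γ+ρ)/(2(1+γ)))·n` with `ρ = (μ+δ)·log N/log n`. -/
noncomputable def nwDreal (μ : ℝ) (n N : ℕ) : ℝ :=
  (nwGamma μ + (μ + (1 - μ) / 2) * Real.log N / Real.log n) / (2 * (1 + nwGamma μ)) * n

/-- The Nisan–Wigderson polynomial `NW_{n,μ}` on the variables `X_{i,j}`,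
`i ∈ [n]`, `j ∈ F_ψ`. -/
noncomputable def NWpoly (F : Type*) [Field F] (μ : ℝ) (n ψ : ℕ) [NeZero ψ] :
    MvPolynomial (Fin n × ZMod ψ) F :=
  ∑ c : Fin ⌊nwDreal μ n (n * ψ)⌋₊ → ZMod ψ,
    ∏ i : Fin n, X (i, ∑ k : Fin ⌊nwDreal μ n (n * ψ)⌋₊, c k * ((i : ℕ) : ZMod ψ) ^ (k : ℕ))

/-!
A product of polynomials in at most `r` variables each stays, after `k` derivatives, a multiple of
itself: on a translated cube `b + {0,1}^V` on which no nonzero factor vanishes, each derivative is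
the product times a function of degree at most `k * r` on the cube. Hence the products of cube
monomials of degree at most `ℓ` with derivatives of order `k` of a sum of `T` such products span a
space of dimension at most `T` times the number of sets of size at most `ℓ + k * r`.

To reach factors in few variables, replace each variable `X (i, c)` by the sum of the variables
`X (i, j)` with `σ (i, j) = c`, for a random `σ`. The Nisan–Wigderson polynomial becomes the sum of
the monomials of a random subcode of a Reed–Solomon code, while each factor loses most of its
variables with high probability. By the MDS property and a second moment estimate, many shifted
derivatives have leading monomials that do not conflict, so they are linearly independent, and
comparing the two dimension counts bounds `T` from below.
-/

/-! ## Multilinear functions on the cube -/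

section Cube

open Finset

variable {V : Type*} [DecidableEq V] {R : Type*} [CommRing R]

/-- The monomial `∏ v ∈ A, x_v` as a function on the cube `{0,1}^V`, whose points are encoded as
finsets `S : Finset V`. -/
def cubeMonomial (R : Type*) [CommRing R] (A S : Finset V) : R := if A ⊆ S then 1 else 0

/-- The functions on the cube given by multilinear polynomials of degree at most `s`. -/
def cubeDegreeLE (V R : Type*) [DecidableEq V] [CommRing R] (s : ℕ) :
    Submodule R (Finset V → R) :=
  Submodule.span R (cubeMonomial R '' {A | #A ≤ s})

theorem cubeMonomial_mul (A B : Finset V) :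
    cubeMonomial R A * cubeMonomial R B = cubeMonomial R (A ∪ B) := by
  funext S
  simp only [cubeMonomial, Pi.mul_apply, union_subset_iff, ite_and, ite_mul, one_mul, zero_mul]

theorem cubeMonomial_mem_cubeDegreeLE {A : Finset V} {s : ℕ} (hA : #A ≤ s) :
    cubeMonomial R A ∈ cubeDegreeLE V R s :=
  Submodule.subset_span ⟨A, hA, rfl⟩

theorem cubeDegreeLE_mono {s t : ℕ} (h : s ≤ t) : cubeDegreeLE V R s ≤ cubeDegreeLE V R t :=
  Submodule.span_mono (Set.image_mono fun _ hA ↦ le_trans hA h)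

theorem cubeMonomial_mul_mem_cubeDegreeLE {A : Finset V} {s t : ℕ} (hA : #A ≤ t)
    {f : Finset V → R} (hf : f ∈ cubeDegreeLE V R s) :
    cubeMonomial R A * f ∈ cubeDegreeLE V R (t + s) := by
  induction hf using Submodule.span_induction with
  | mem f hf =>
    obtain ⟨B, hB, rfl⟩ := hf
    rw [cubeMonomial_mul]
    exact cubeMonomial_mem_cubeDegreeLE ((card_union_le A B).trans (add_le_add hA hB))
  | zero => simp
  | add f g _ _ hf hg => rw [mul_add]; exact add_mem hf hg
  | smul c f _ hf => rw [mul_smul_comm]; exact Submodule.smul_mem _ _ hf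

theorem mem_cubeDegreeLE_of_eq_inter (U : Finset V) (f : Finset V → R)
    (hf : ∀ S, f S = f (S ∩ U)) : f ∈ cubeDegreeLE V R #U := by
  induction U using Finset.induction_on generalizing f with
  | empty =>
    have hconst : f = f ∅ • cubeMonomial R ∅ := by
      funext S
      simp [cubeMonomial, hf S]
    rw [hconst]
    exact Submodule.smul_mem _ _ (cubeMonomial_mem_cubeDegreeLE le_rfl)
  | insert u U hu ih =>
    let f₀ : Finset V → R := fun S ↦ f (S ∩ U)
    let f₁ : Finset V → R := fun S ↦ f (insert u (S ∩ U))
    have h₀ : f₀ ∈ cubeDegreeLE V R #U := ih f₀ fun S ↦ by simp [f₀]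
    have h₁ : f₁ ∈ cubeDegreeLE V R #U := ih f₁ fun S ↦ by simp [f₁]
    have hdecomp : f = f₀ + cubeMonomial R {u} * (f₁ - f₀) := by
      funext S
      by_cases h : u ∈ S
      · simp [f₀, f₁, cubeMonomial, h, hf S, inter_insert_of_mem]
      · simp [f₀, cubeMonomial, h, hf S, inter_insert_of_notMem]
    rw [hdecomp, card_insert_of_notMem hu]
    refine add_mem (cubeDegreeLE_mono (Nat.le_succ _) h₀) ?_
    rw [add_comm]
    exact cubeMonomial_mul_mem_cubeDegreeLE (card_singleton u).le (sub_mem h₁ h₀)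

theorem finrank_cubeDegreeLE_le [Fintype V] [StrongRankCondition R] (s : ℕ) :
    Module.finrank R (cubeDegreeLE V R s) ≤ #{A : Finset V | #A ≤ s} := by
  classical
  have h := finrank_span_finset_le_card (R := R)
    ((univ.filter fun A : Finset V ↦ #A ≤ s).image (cubeMonomial R))
  rw [coe_image, coe_filter_univ] at h
  exact h.trans card_image_le

/-- The coefficient of `∏ v ∈ B, x_v` in the multilinear polynomial representing a function on the
cube, computed by Möbius inversion. -/
def cubeCoeff (R : Type*) [CommRing R] (B : Finset V) : (Finset V → R) →ₗ[R] R :=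
  ∑ Z ∈ B.powerset, (-1 : R) ^ #Z • LinearMap.proj (B \ Z)

theorem cubeCoeff_cubeMonomial (B A : Finset V) :
    cubeCoeff R B (cubeMonomial R A) = if A = B then 1 else 0 := by
  have hsum : cubeCoeff R B (cubeMonomial R A) =
      ∑ Z ∈ B.powerset with A ⊆ B \ Z, (-1 : R) ^ #Z := by
    simp [cubeCoeff, cubeMonomial, LinearMap.sum_apply, sum_filter]
  rw [hsum]
  by_cases hA : A ⊆ B
  · have hfilter : {Z ∈ B.powerset | A ⊆ B \ Z} = (B \ A).powerset := by
      ext Z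
      simp only [mem_filter, mem_powerset, subset_sdiff, hA, true_and, disjoint_comm]
    have hpow := congrArg (Int.cast : ℤ → R) (sum_powerset_neg_one_pow_card (x := B \ A))
    push_cast at hpow
    rw [hfilter, hpow]
    refine if_congr ?_ rfl rfl
    rw [sdiff_eq_empty_iff_subset]
    exact ⟨hA.antisymm, fun h ↦ h ▸ Subset.rfl⟩
  · rw [filter_false_of_mem fun Z _ h ↦ hA (h.trans sdiff_subset), sum_empty,
      if_neg fun h ↦ hA h.subset]

end Cube

/-! ## Shifted partial derivatives -/

section Derivatives

open Finset

variable {V : Type*}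

section CommRing

variable {R : Type*} [CommRing R]

/-- The iterated partial derivative along a list of variables. -/
noncomputable def iterPderiv (L : List V) : MvPolynomial V R →ₗ[R] MvPolynomial V R :=
  (L.map fun v ↦ ((pderiv v).toLinearMap : Module.End R (MvPolynomial V R))).prod

theorem iterPderiv_nil (p : MvPolynomial V R) : iterPderiv [] p = p := rfl

theorem iterPderiv_cons (v : V) (L : List V) (p : MvPolynomial V R) :
    iterPderiv (v :: L) p = pderiv v (iterPderiv L p) := by
  simp [iterPderiv]

theorem pderiv_mem_supported {s : Set V} {p : MvPolynomial V R} (hp : p ∈ supported R s) (v : V) :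
    pderiv v p ∈ supported R s := by
  rw [supported_eq_adjoin_X] at hp ⊢
  induction hp using Algebra.adjoin_induction with
  | mem p hp =>
    obtain ⟨w, -, rfl⟩ := hp
    by_cases h : w = v
    · subst h; rw [pderiv_X_self]; exact one_mem _
    · rw [pderiv_X_of_ne h]; exact zero_mem _
  | algebraMap c => rw [algebraMap_eq, pderiv_C]; exact zero_mem _
  | add p q _ _ hp hq => rw [map_add]; exact add_mem hp hq
  | mul p q hp' hq' hp hq =>
    rw [pderiv_mul]
    exact add_mem (mul_mem hp hq') (mul_mem hp' hq)

theorem pderiv_prod {J : Type*} [DecidableEq J] (v : V) (s : Finset J)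
    (p : J → MvPolynomial V R) :
    pderiv v (∏ j ∈ s, p j) = ∑ j ∈ s, (∏ i ∈ s.erase j, p i) * pderiv v (p j) := by
  induction s using Finset.induction_on with
  | empty => simp
  | insert j₀ s hj₀ ih =>
    rw [prod_insert hj₀, pderiv_mul, ih, sum_insert hj₀, erase_insert hj₀, mul_sum,
      mul_comm (pderiv v (p j₀))]
    congr 1
    refine sum_congr rfl fun j hj ↦ ?_
    rw [erase_insert_of_ne (ne_of_mem_of_not_mem hj hj₀).symm,
      prod_insert (fun h ↦ hj₀ (mem_of_mem_erase h)), mul_assoc]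

variable [DecidableEq V]

theorem pderiv_prod_X (v : V) (A : Finset V) :
    pderiv v (∏ w ∈ A, X w : MvPolynomial V R) = if v ∈ A then ∏ w ∈ A.erase v, X w else 0 := by
  rw [pderiv_prod]
  simp only [pderiv_X, Pi.single_apply, mul_ite, mul_one, mul_zero,
    sum_ite_eq']

theorem iterPderiv_prod_X (A : Finset V) {L : List V} (hL : L.Nodup) :
    iterPderiv L (∏ v ∈ A, X v : MvPolynomial V R) =
      if L.toFinset ⊆ A then ∏ v ∈ A \ L.toFinset, X v else 0 := by
  induction L with
  | nil => simp [iterPderiv_nil]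
  | cons v L ih =>
    obtain ⟨hv, hL⟩ := List.nodup_cons.mp hL
    have hmem : v ∈ A \ L.toFinset ↔ v ∈ A := by simp [hv]
    rw [iterPderiv_cons, ih hL, apply_ite (pderiv v), map_zero, pderiv_prod_X]
    simp only [hmem, List.toFinset_cons, insert_subset_iff, sdiff_insert, ite_and]
    split_ifs <;> rfl

/-- The span of the polynomials obtained from `∏ j, P j` by replacing at most `k` of its factors
by a polynomial in the variables of these factors. -/
noncomputable def partialProductSpan {J : Type*} [Fintype J] [DecidableEq J]
    (P : J → MvPolynomial V R) (k : ℕ) : Submodule R (MvPolynomial V R) :=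
  Submodule.span R {p | ∃ I : Finset J, #I ≤ k ∧
    ∃ g ∈ supported R (I.biUnion fun j ↦ (P j).vars : Set V), p = (∏ j ∈ Iᶜ, P j) * g}

variable {J : Type*} [Fintype J] [DecidableEq J]

theorem pderiv_mem_partialProductSpan {P : J → MvPolynomial V R} {k : ℕ} {p : MvPolynomial V R}
    (hp : p ∈ partialProductSpan P k) (v : V) :
    pderiv v p ∈ partialProductSpan P (k + 1) := by
  induction hp using Submodule.span_induction with
  | mem p hp =>
    obtain ⟨I, hI, g, hg, rfl⟩ := hp
    rw [pderiv_mul, pderiv_prod, sum_mul]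
    refine add_mem (sum_mem fun j _ ↦ Submodule.subset_span ?_) (Submodule.subset_span ?_)
    · refine ⟨insert j I, (card_insert_le _ _).trans (Nat.succ_le_succ hI), pderiv v (P j) * g,
        mul_mem (pderiv_mem_supported (supported_mono ?_ (mem_supported_vars (P j))) v)
          (supported_mono ?_ hg), by rw [mul_assoc, compl_insert]⟩
      · exact_mod_cast subset_biUnion_of_mem (fun j ↦ (P j).vars) (mem_insert_self j I)
      · exact_mod_cast biUnion_subset_biUnion_of_subset_left _ (subset_insert j I)
    · exact ⟨I, hI.trans (Nat.le_succ k), pderiv v g, pderiv_mem_supported hg v, rfl⟩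
  | zero => simp
  | add p q _ _ hp hq => rw [map_add]; exact add_mem hp hq
  | smul c p _ hp => rw [Derivation.map_smul]; exact Submodule.smul_mem _ _ hp

theorem iterPderiv_prod_mem_partialProductSpan (P : J → MvPolynomial V R) (L : List V) :
    iterPderiv L (∏ j, P j) ∈ partialProductSpan P L.length := by
  induction L with
  | nil => exact Submodule.subset_span ⟨∅, by simp, 1, one_mem _, by simp [iterPderiv_nil]⟩
  | cons v L ih => rw [iterPderiv_cons]; exact pderiv_mem_partialProductSpan ih v

/-- Evaluation of polynomials on the translate of the cube `{0,1}^V` by `b`. -/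
noncomputable def cubeEval (b : V → R) : MvPolynomial V R →ₐ[R] (Finset V → R) :=
  AlgHom.pi fun S ↦ aeval fun v ↦ b v + if v ∈ S then 1 else 0

theorem cubeEval_apply (b : V → R) (p : MvPolynomial V R) (S : Finset V) :
    cubeEval b p S = aeval (fun v ↦ b v + if v ∈ S then 1 else 0) p := rfl

theorem cubeEval_inter_of_vars_subset (b : V → R) {p : MvPolynomial V R} {U : Finset V}
    (hp : p.vars ⊆ U) (S : Finset V) : cubeEval b p S = cubeEval b p (S ∩ U) :=
  eval₂Hom_congr' rfl (fun v hv _ ↦ by simp [hp hv]) rfl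

theorem cubeEval_X (b : V → R) (v : V) :
    cubeEval b (X v) = cubeMonomial R {v} + algebraMap R _ (b v) := by
  funext S
  simp [cubeEval_apply, cubeMonomial, add_comm]

theorem cubeMonomial_mul_cubeEval_prod_X (b : V → R) (β A : Finset V) :
    cubeMonomial R β * cubeEval b (∏ v ∈ A, X v) =
      ∑ Z ∈ A.powerset, (∏ v ∈ A \ Z, b v) • cubeMonomial R (β ∪ Z) := by
  have hprod (Z : Finset V) : ∏ v ∈ Z, cubeMonomial R {v} = cubeMonomial R Z := by
    induction Z using Finset.induction_on with
    | empty => funext S; simp [cubeMonomial]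
    | insert v Z hv ih => rw [prod_insert hv, ih, cubeMonomial_mul, insert_eq]
  simp only [map_prod, cubeEval_X, prod_add, hprod, mul_sum]
  refine sum_congr rfl fun Z _ ↦ ?_
  rw [← map_prod, ← mul_assoc, cubeMonomial_mul, mul_comm, Algebra.smul_def]

theorem cubeCoeff_cubeMonomial_mul_cubeEval_prod_X (b : V → R) {β A B : Finset V}
    (hB : #B = #β + #A) :
    cubeCoeff R B (cubeMonomial R β * cubeEval b (∏ v ∈ A, X v)) =
      if β ∪ A = B then 1 else 0 := by
  rw [cubeMonomial_mul_cubeEval_prod_X, map_sum, sum_eq_single_of_mem A (mem_powerset_self A)]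
  · rw [map_smul, cubeCoeff_cubeMonomial, sdiff_self, bot_eq_empty, prod_empty,
      one_smul]
  · intro Z hZ hne
    have hlt : #Z < #A := card_lt_card (ssubset_of_subset_of_ne (mem_powerset.mp hZ) hne)
    have hcard := card_union_le β Z
    rw [map_smul, cubeCoeff_cubeMonomial, if_neg, smul_zero]
    rintro rfl
    omega

end CommRing

variable [DecidableEq V] {F : Type*} [Field F]

theorem exists_translate_cubeEval_ne_zero [Finite V] [Infinite F] {I : Type*} [Finite I]
    (p : I → MvPolynomial V F) : ∃ b : V → F, ∀ i, p i ≠ 0 → ∀ S, cubeEval b (p i) S ≠ 0 := by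
  classical
  cases nonempty_fintype V
  cases nonempty_fintype I
  let shift (S : Finset V) : MvPolynomial V F →ₐ[F] MvPolynomial V F :=
    aeval fun v ↦ X v + C (if v ∈ S then 1 else 0)
  have aeval_shift (b : V → F) (S : Finset V) (q : MvPolynomial V F) :
      aeval b (shift S q) = cubeEval b q S := by
    rw [cubeEval_apply, comp_aeval_apply]
    simp only [map_add, aeval_X, aeval_C, Algebra.algebraMap_self, RingHom.id_apply]
  have shift_ne_zero (S : Finset V) (q : MvPolynomial V F) (hq : q ≠ 0) : shift S q ≠ 0 := by
    refine fun h ↦ hq (MvPolynomial.funext fun x ↦ ?_)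
    have hx := aeval_shift (fun v ↦ x v - if v ∈ S then 1 else 0) S q
    simpa [h, cubeEval_apply] using hx.symm
  let q : MvPolynomial V F := ∏ i with p i ≠ 0, ∏ S, shift S (p i)
  have hq : q ≠ 0 := prod_ne_zero_iff.mpr fun i hi ↦ prod_ne_zero_iff.mpr fun S _ ↦
    shift_ne_zero S _ (mem_filter.mp hi).2
  obtain ⟨b, hb⟩ : ∃ b : V → F, aeval b q ≠ 0 := by
    by_contra! h
    exact hq (MvPolynomial.funext fun x ↦ by simpa using h x)
  refine ⟨b, fun i hi S ↦ ?_⟩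
  simp only [q, map_prod, aeval_shift, prod_ne_zero_iff, mem_filter, mem_univ, true_and,
    forall_const] at hb
  exact hb i hi S

variable {J : Type*} [Fintype J]

theorem cubeEval_mem_map_mulLeft_of_mem_partialProductSpan [DecidableEq J]
    {P : J → MvPolynomial V F} {r k : ℕ} (hr : ∀ j, #(P j).vars ≤ r) {b : V → F}
    (hb : ∀ j S, cubeEval b (P j) S ≠ 0) {p : MvPolynomial V F} (hp : p ∈ partialProductSpan P k) :
    cubeEval b p ∈
      (cubeDegreeLE V F (k * r)).map (LinearMap.mulLeft F (cubeEval b (∏ j, P j))) := by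
  suffices partialProductSpan P k ≤ ((cubeDegreeLE V F (k * r)).map
      (LinearMap.mulLeft F (cubeEval b (∏ j, P j)))).comap (cubeEval b).toLinearMap from this hp
  refine Submodule.span_le.mpr ?_
  rintro _ ⟨I, hI, g, hg, rfl⟩
  set U := I.biUnion fun j ↦ (P j).vars
  have hU : #U ≤ k * r :=
    (card_biUnion_le_card_mul _ _ r fun j _ ↦ hr j).trans (Nat.mul_le_mul_right r hI)
  have hgU : g.vars ⊆ U := by exact_mod_cast mem_supported.mp hg
  refine ⟨cubeEval b g / ∏ j ∈ I, cubeEval b (P j),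
    cubeDegreeLE_mono hU (mem_cubeDegreeLE_of_eq_inter U _ fun S ↦ ?_), ?_⟩
  · rw [Pi.div_apply, Pi.div_apply, prod_apply, prod_apply, cubeEval_inter_of_vars_subset b hgU S]
    congr 1
    exact prod_congr rfl fun j hj ↦ cubeEval_inter_of_vars_subset b
      (subset_biUnion_of_mem (fun j ↦ (P j).vars) hj) S
  · funext S
    have hS : ∏ j ∈ I, cubeEval b (P j) S ≠ 0 := prod_ne_zero_iff.mpr fun j _ ↦ hb j S
    rw [← prod_compl_mul_prod I]
    simp only [LinearMap.mulLeft_apply, AlgHom.toLinearMap_apply, map_mul, map_prod, Pi.mul_apply,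
      Pi.div_apply, prod_apply]
    field_simp

theorem cubeMonomial_mul_cubeEval_iterPderiv_prod_mem {P : J → MvPolynomial V F} {r ℓ : ℕ}
    (hr : ∀ j, #(P j).vars ≤ r) {b : V → F} (hb : ∀ j, P j ≠ 0 → ∀ S, cubeEval b (P j) S ≠ 0)
    (L : List V) {β : Finset V} (hβ : #β ≤ ℓ) :
    cubeMonomial F β * cubeEval b (iterPderiv L (∏ j, P j)) ∈
      (cubeDegreeLE V F (ℓ + L.length * r)).map
        (LinearMap.mulLeft F (cubeEval b (∏ j, P j))) := by
  classical
  by_cases hP : ∃ j, P j = 0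
  · obtain ⟨j, hj⟩ := hP
    rw [prod_eq_zero (mem_univ j) hj, map_zero (iterPderiv L), map_zero (cubeEval b), mul_zero]
    exact zero_mem _
  · push Not at hP
    obtain ⟨h, hh, heq⟩ := cubeEval_mem_map_mulLeft_of_mem_partialProductSpan hr
      (fun j ↦ hb j (hP j)) (iterPderiv_prod_mem_partialProductSpan P L)
    refine ⟨cubeMonomial F β * h, cubeMonomial_mul_mem_cubeDegreeLE hβ hh, ?_⟩
    rw [← heq]
    exact mul_left_comm _ _ _

theorem card_le_mul_finrank_of_mem_sum_map_mulLeft {M : Type*} [Ring M] [Algebra F M]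
    {E I : Type*} [Fintype E] [Fintype I] (W : Submodule F M) [Module.Finite F W] (w : I → M)
    {f : E → M} (hf : LinearIndependent F f)
    (hfw : ∀ e, ∃ g : I → M, f e = ∑ i, g i ∧ ∀ i, g i ∈ W.map (LinearMap.mulLeft F (w i))) :
    Fintype.card E ≤ Fintype.card I * Module.finrank F W := by
  classical
  let Φ : (I → W) →ₗ[F] M := ∑ i, LinearMap.mulLeft F (w i) ∘ₗ W.subtype ∘ₗ LinearMap.proj i
  have hΦ : ∀ e, f e ∈ LinearMap.range Φ := fun e ↦ by
    obtain ⟨g, hg, hgW⟩ := hfw e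
    choose h hhW hh using hgW
    exact ⟨fun i ↦ ⟨h i, hhW i⟩, by simp [Φ, LinearMap.sum_apply, hg, ← hh]⟩
  have hind : LinearIndependent F fun e ↦ (⟨f e, hΦ e⟩ : LinearMap.range Φ) :=
    LinearIndependent.of_comp (LinearMap.range Φ).subtype hf
  calc Fintype.card E ≤ Module.finrank F (LinearMap.range Φ) := hind.fintype_card_le_finrank
    _ ≤ Module.finrank F (I → W) := Φ.finrank_range_le
    _ = Fintype.card I * Module.finrank F W := by
      rw [Module.finrank_pi_fintype, sum_const, card_univ, smul_eq_mul]

theorem card_le_of_linearIndependent_shifted_iterPderiv [Fintype V] {E I : Type*} [Fintype E]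
    [Fintype I] {r k ℓ : ℕ} {P : I → J → MvPolynomial V F} (hr : ∀ i j, #(P i j).vars ≤ r)
    {b : V → F} (hb : ∀ i j, P i j ≠ 0 → ∀ S, cubeEval b (P i j) S ≠ 0)
    {L : E → List V} (hL : ∀ e, (L e).length = k) {β : E → Finset V} (hβ : ∀ e, #(β e) ≤ ℓ)
    (hind : LinearIndependent F fun e ↦
      cubeMonomial F (β e) * cubeEval b (iterPderiv (L e) (∑ i, ∏ j, P i j))) :
    Fintype.card E ≤ Fintype.card I * #{A : Finset V | #A ≤ ℓ + k * r} := by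
  refine (card_le_mul_finrank_of_mem_sum_map_mulLeft (cubeDegreeLE V F (ℓ + k * r))
    (fun i ↦ cubeEval b (∏ j, P i j)) hind fun e ↦
      ⟨fun i ↦ cubeMonomial F (β e) * cubeEval b (iterPderiv (L e) (∏ j, P i j)), ?_,
        fun i ↦ ?_⟩).trans (Nat.mul_le_mul_left _ (finrank_cubeDegreeLE_le _))
  · rw [map_sum, map_sum, mul_sum]
  · exact hL e ▸ cubeMonomial_mul_cubeEval_iterPderiv_prod_mem (hr i) (hb i) (L e) (hβ e)

end Derivatives

/-! ## Conflict-free shifts of a set-multilinear polynomial -/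

section ConflictFree

open Finset

variable {V : Type*} [DecidableEq V]

/-- The multilinear polynomial whose monomials, all with coefficient one, are the members of the
family `𝒜`. -/
noncomputable def familyPoly (R : Type*) [CommRing R] (𝒜 : Finset (Finset V)) :
    MvPolynomial V R :=
  ∑ A ∈ 𝒜, ∏ v ∈ A, X v

/-- Derivatives are taken along the part of a monomial in the block `W`. Then `B` conflicts with
the monomial `A` shifted by `β` if it survives the derivative along `A ∩ W` and is disjoint from
`β` outside `W`, or if outside `W` it divides the shifted monomial. -/
def Conflict (W A B β : Finset V) : Prop :=
  (B ∩ W = A ∩ W ∧ Disjoint β (B \ W)) ∨ B \ W ⊆ β ∪ A \ W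

/-- The shifts `β` of the derivative of `familyPoly 𝒜` along `A ∩ W` that are disjoint from
`A \ W` and for which no other member of `𝒜` conflicts with `A`. -/
def ConflictFree (𝒜 : Finset (Finset V)) (W A β : Finset V) : Prop :=
  Disjoint β (A \ W) ∧ ∀ B ∈ 𝒜, B ≠ A → ¬Conflict W A B β

variable {W : Finset V} {𝒜 : Finset (Finset V)} {k N : ℕ}

theorem ConflictFree.eq_of_subset {A B β : Finset V} (h : ConflictFree 𝒜 W A β) (hB : B ∈ 𝒜)
    (hsub : B \ W ⊆ β ∪ A \ W) : B = A := by
  by_contra hne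
  exact h.2 B hB hne (Or.inr hsub)

theorem ConflictFree.eq_of_inter_eq {A B β : Finset V} (h : ConflictFree 𝒜 W A β) (hB : B ∈ 𝒜)
    (hBA : B ∩ W = A ∩ W) (hβ : Disjoint β (B \ W)) : B = A := by
  by_contra hne
  exact h.2 B hB hne (Or.inl ⟨hBA, hβ⟩)

section Coefficients

variable {R : Type*} [CommRing R]

theorem cubeCoeff_shifted_familyPoly (hk : ∀ A ∈ 𝒜, #(A ∩ W) = k) (hN : ∀ A ∈ 𝒜, #(A \ W) = N)
    (b : V → R) {A β C : Finset V} (hA : A ∈ 𝒜) (hC : #C = #β + N) :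
    cubeCoeff R C (cubeMonomial R β * cubeEval b (iterPderiv (A ∩ W).toList (familyPoly R 𝒜))) =
      ∑ B ∈ 𝒜, if B ∩ W = A ∩ W ∧ β ∪ B \ W = C then 1 else 0 := by
  have hsub : ∀ B ∈ 𝒜, A ∩ W ⊆ B ↔ B ∩ W = A ∩ W := fun B hB ↦
    ⟨fun h ↦ (eq_of_subset_of_card_le (subset_inter h inter_subset_right)
      ((hk B hB).trans (hk A hA).symm).le).symm, fun h ↦ h ▸ inter_subset_left⟩
  simp only [familyPoly, map_sum, mul_sum]
  refine sum_congr rfl fun B hB ↦ ?_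
  rw [iterPderiv_prod_X B (nodup_toList _), toList_toFinset]
  by_cases h : B ∩ W = A ∩ W
  · rw [if_pos ((hsub B hB).mpr h), ← h, sdiff_inter_self_left,
      cubeCoeff_cubeMonomial_mul_cubeEval_prod_X b (hC.trans (by rw [hN B hB]))]
    simp
  · rw [if_neg (mt (hsub B hB).mp h), map_zero, mul_zero, map_zero, if_neg fun h' ↦ h h'.1]

theorem cubeCoeff_shifted_familyPoly_of_conflictFree (hk : ∀ A ∈ 𝒜, #(A ∩ W) = k)
    (hN : ∀ A ∈ 𝒜, #(A \ W) = N) (b : V → R) {A β A' β' : Finset V} (hA : A ∈ 𝒜) (hA' : A' ∈ 𝒜)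
    (h : ConflictFree 𝒜 W A β) (h' : ConflictFree 𝒜 W A' β') (hβ : #β = #β') :
    cubeCoeff R (β ∪ A \ W)
        (cubeMonomial R β' * cubeEval b (iterPderiv (A' ∩ W).toList (familyPoly R 𝒜))) =
      if (A, β) = (A', β') then 1 else 0 := by
  have hcard : #(β ∪ A \ W) = #β' + N := by rw [card_union_of_disjoint h.1, hN A hA, hβ]
  have honly : ∀ B ∈ 𝒜, B ≠ A → ¬(B ∩ W = A' ∩ W ∧ β' ∪ B \ W = β ∪ A \ W) :=
    fun B hB hne hBA ↦ hne (h.eq_of_subset hB (hBA.2 ▸ subset_union_right))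
  rw [cubeCoeff_shifted_familyPoly hk hN b hA' hcard,
    sum_eq_single_of_mem A hA fun B hB hne ↦ if_neg (honly B hB hne)]
  refine if_congr ⟨fun ⟨hAA', hunion⟩ ↦ ?_, ?_⟩ rfl rfl
  · have hdisj : Disjoint β' (A \ W) := by
      rw [← card_union_eq_card_add_card, hunion, hcard, hN A hA]
    rw [Prod.mk.injEq, ← union_sdiff_cancel_right h.1, ← hunion, union_sdiff_cancel_right hdisj]
    exact ⟨h'.eq_of_inter_eq hA hAA' hdisj, rfl⟩
  · rintro ⟨⟩
    exact ⟨rfl, rfl⟩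

end Coefficients

section Count

variable [Fintype V] {F : Type*} [Field F] {T d r : ℕ} {P : Fin T → Fin d → MvPolynomial V F}

theorem card_conflictFree_le_of_infinite [Infinite F] (hk : ∀ A ∈ 𝒜, #(A ∩ W) = k)
    (hN : ∀ A ∈ 𝒜, #(A \ W) = N) (hr : ∀ i j, #(P i j).vars ≤ r)
    (hP : familyPoly F 𝒜 = ∑ i, ∏ j, P i j) {ℓ : ℕ} {E : Finset (Finset V × Finset V)}
    (hE : ∀ e ∈ E, e.1 ∈ 𝒜 ∧ ConflictFree 𝒜 W e.1 e.2 ∧ #e.2 = ℓ) :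
    #E ≤ T * #{A : Finset V | #A ≤ ℓ + k * r} := by
  obtain ⟨b, hb⟩ := exists_translate_cubeEval_ne_zero fun ij : Fin T × Fin d ↦ P ij.1 ij.2
  have hcoeff (e e' : E) := cubeCoeff_shifted_familyPoly_of_conflictFree hk hN b (hE e e.2).1
    (hE e' e'.2).1 (hE e e.2).2.1 (hE e' e'.2).2.1 ((hE e e.2).2.2.trans (hE e' e'.2).2.2.symm)
  have hind : LinearIndependent F fun e : E ↦ cubeMonomial F e.1.2 *
      cubeEval b (iterPderiv (e.1.1 ∩ W).toList (∑ i, ∏ j, P i j)) := by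
    rw [← hP]
    refine LinearIndependent.of_pairwise_dual_eq_zero_one _
      (fun e : E ↦ cubeCoeff F (e.1.2 ∪ e.1.1 \ W)) (fun e e' hne ↦ ?_) fun e ↦ ?_
    · exact (hcoeff e e').trans (if_neg fun h ↦ hne (Subtype.ext h))
    · exact (hcoeff e e).trans (if_pos rfl)
  simpa using card_le_of_linearIndependent_shifted_iterPderiv hr (fun i j ↦ hb (i, j))
    (fun e : E ↦ by rw [length_toList, hk _ (hE e e.2).1]) (fun e : E ↦ (hE e e.2).2.2.le) hind

/- Passing to the algebraic closure provides the infinitely many points that the choice of the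
translate of the cube requires. -/
theorem card_conflictFree_le (hk : ∀ A ∈ 𝒜, #(A ∩ W) = k) (hN : ∀ A ∈ 𝒜, #(A \ W) = N)
    (hr : ∀ i j, #(P i j).vars ≤ r) (hP : familyPoly F 𝒜 = ∑ i, ∏ j, P i j) {ℓ : ℕ}
    {E : Finset (Finset V × Finset V)}
    (hE : ∀ e ∈ E, e.1 ∈ 𝒜 ∧ ConflictFree 𝒜 W e.1 e.2 ∧ #e.2 = ℓ) :
    #E ≤ T * #{A : Finset V | #A ≤ ℓ + k * r} := by
  let φ := algebraMap F (AlgebraicClosure F)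
  refine card_conflictFree_le_of_infinite (P := fun i j ↦ map φ (P i j)) hk hN
    (fun i j ↦ (card_le_card (vars_map _ φ)).trans (hr i j)) ?_ hE
  simpa [familyPoly] using congrArg (map φ) hP

end Count

/-- A bound for the conditional probability, given `Disjoint β (A \ W)`, that `B` conflicts with
the monomial `A` shifted by `β`. -/
noncomputable def conflictWeight (W : Finset V) (x : ℝ) (A B : Finset V) : ℝ :=
  (if B ∩ W = A ∩ W then (1 / (1 + x)) ^ #((B \ W) \ (A \ W)) else 0) +
    (x / (1 + x)) ^ #((B \ W) \ (A \ W))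

theorem conflictWeight_nonneg (W : Finset V) {x : ℝ} (hx : 0 ≤ x) (A B : Finset V) :
    0 ≤ conflictWeight W x A B := by
  rw [conflictWeight]
  split_ifs <;> positivity

end ConflictFree

section ShiftWeight

open Finset

variable {V : Type*} [Fintype V]

/-- The product measure on shifts under which each variable is chosen with odds `x`. -/
noncomputable def shiftWeight (x : ℝ) (β : Finset V) : ℝ := x ^ #β / (1 + x) ^ Fintype.card V

theorem shiftWeight_nonneg {x : ℝ} (hx : 0 ≤ x) (β : Finset V) : 0 ≤ shiftWeight x β := by
  unfold shiftWeight; positivity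

theorem sum_shiftWeight [DecidableEq V] {x : ℝ} (hx : 0 ≤ x) {A Δ : Finset V}
    (hAΔ : Disjoint A Δ) :
    ∑ β with Disjoint β A ∧ Δ ⊆ β, shiftWeight x β = (1 / (1 + x)) ^ #A * (x / (1 + x)) ^ #Δ := by
  have hx1 : 1 + x ≠ 0 := by positivity
  let f (v : V) : ℝ := if v ∈ A then 0 else x / (1 + x)
  let g (v : V) : ℝ := if v ∈ Δ then 0 else 1 / (1 + x)
  have hterm (β : Finset V) : (if Disjoint β A ∧ Δ ⊆ β then shiftWeight x β else 0) =
      (∏ v ∈ β, f v) * ∏ v ∈ βᶜ, g v := by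
    split_ifs with h
    · rw [prod_congr rfl fun v hv ↦ if_neg (disjoint_left.mp h.1 hv),
        prod_congr rfl fun v hv ↦ if_neg fun hvΔ ↦ mem_compl.mp hv (h.2 hvΔ), prod_const,
        prod_const, div_pow, div_pow, one_pow, div_mul_div_comm, mul_one, ← pow_add,
        card_add_card_compl, shiftWeight]
    · rcases not_and_or.mp h with h | h
      · obtain ⟨v, hv, hvA⟩ := not_disjoint_iff.mp h
        have hf : ∏ v ∈ β, f v = 0 := prod_eq_zero hv (if_pos hvA)
        rw [hf, zero_mul]
      · obtain ⟨v, hv, hvβ⟩ := not_subset.mp h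
        have hg : ∏ v ∈ βᶜ, g v = 0 := prod_eq_zero (mem_compl.mpr hvβ) (if_pos hv)
        rw [hg, mul_zero]
  have hfactor (v : V) :
      f v + g v = (if v ∈ A then 1 / (1 + x) else 1) * if v ∈ Δ then x / (1 + x) else 1 := by
    by_cases hA : v ∈ A
    · simp [f, g, hA, disjoint_left.mp hAΔ hA]
    · by_cases hΔ : v ∈ Δ
      · simp [f, g, hA, hΔ]
      · simp only [f, g, hA, hΔ, if_false]
        field_simp
        ring
  rw [sum_filter, sum_congr rfl fun β _ ↦ hterm β, ← Fintype.prod_add,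
    prod_congr rfl fun v _ ↦ hfactor v, prod_mul_distrib, prod_ite_mem, prod_ite_mem, univ_inter,
    univ_inter, prod_const, prod_const]

theorem sum_shiftWeight_univ {x : ℝ} (hx : 0 ≤ x) : ∑ β : Finset V, shiftWeight x β = 1 := by
  classical
  simpa using sum_shiftWeight hx (disjoint_empty_left (∅ : Finset V))

theorem pow_mul_card_le_of_card_le {x : ℝ} (hx : 0 ≤ x) (hx1 : x ≤ 1) (s : ℕ) :
    x ^ s * #{A : Finset V | #A ≤ s} ≤ (1 + x) ^ Fintype.card V := by
  have hpos : 0 < (1 + x) ^ Fintype.card V := by positivity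
  have hsum := sum_shiftWeight_univ (V := V) hx
  simp only [shiftWeight, ← sum_div, div_eq_one_iff_eq hpos.ne'] at hsum
  rw [← hsum, mul_comm, ← nsmul_eq_mul, ← sum_const]
  exact (sum_le_sum fun A hA ↦ pow_le_pow_of_le_one hx hx1 (mem_filter.mp hA).2).trans
    (sum_le_univ_sum_of_nonneg fun A ↦ by positivity)

variable [DecidableEq V]

open Classical in
theorem sum_shiftWeight_conflict_le {x : ℝ} (hx : 0 ≤ x) (W A B : Finset V) :
    ∑ β with Disjoint β (A \ W) ∧ Conflict W A B β, shiftWeight x β ≤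
      (1 / (1 + x)) ^ #(A \ W) * conflictWeight W x A B := by
  have hsplit (β : Finset V) :
      (if Disjoint β (A \ W) ∧ Conflict W A B β then shiftWeight x β else 0) ≤
      (if B ∩ W = A ∩ W ∧ Disjoint β (A \ W ∪ (B \ W) \ (A \ W)) ∧ ∅ ⊆ β
        then shiftWeight x β else 0) +
      if Disjoint β (A \ W) ∧ (B \ W) \ (A \ W) ⊆ β then shiftWeight x β else 0 := by
    have hβ := shiftWeight_nonneg hx β
    have hdvd : (B \ W) \ (A \ W) ⊆ β ↔ B \ W ⊆ A \ W ∪ β := sdiff_le_iff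
    simp only [Conflict, union_comm β, hdvd, union_sdiff_self_eq_union, disjoint_union_right,
      empty_subset, and_true]
    split_ifs <;> first | linarith | (exfalso; tauto)
  rw [sum_filter]
  refine (sum_le_sum fun β _ ↦ hsplit β).trans_eq ?_
  rw [sum_add_distrib, ← sum_filter (fun β ↦ Disjoint β (A \ W) ∧ (B \ W) \ (A \ W) ⊆ β),
    sum_shiftWeight hx disjoint_sdiff, conflictWeight, mul_add]
  congr 1
  split_ifs with h
  · simp only [h, true_and]
    rw [← sum_filter, sum_shiftWeight hx (disjoint_empty_right _),
      card_union_of_disjoint disjoint_sdiff, pow_add, card_empty, pow_zero, mul_one]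
  · simp [h]

open Classical in
theorem le_sum_shiftWeight_conflictFree {x : ℝ} (hx : 0 ≤ x) (𝒜 : Finset (Finset V))
    (W A : Finset V) :
    (1 / (1 + x)) ^ #(A \ W) * (1 - ∑ B ∈ 𝒜.erase A, conflictWeight W x A B) ≤
      ∑ β with ConflictFree 𝒜 W A β, shiftWeight x β := by
  have hdisj : ∑ β with Disjoint β (A \ W), shiftWeight x β = (1 / (1 + x)) ^ #(A \ W) := by
    simpa using sum_shiftWeight hx (disjoint_empty_right (A \ W))
  have hpoint (β : Finset V) : (if Disjoint β (A \ W) then shiftWeight x β else 0) ≤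
      (if ConflictFree 𝒜 W A β then shiftWeight x β else 0) + ∑ B ∈ 𝒜.erase A,
        if Disjoint β (A \ W) ∧ Conflict W A B β then shiftWeight x β else 0 := by
    have hβ := shiftWeight_nonneg hx β
    have hterm (B : Finset V) :
        0 ≤ if Disjoint β (A \ W) ∧ Conflict W A B β then shiftWeight x β else 0 := by
      split_ifs <;> simp [hβ]
    have hsum := sum_nonneg fun B (_ : B ∈ 𝒜.erase A) ↦ hterm B
    by_cases hd : Disjoint β (A \ W)
    · by_cases hfree : ConflictFree 𝒜 W A β
      · rw [if_pos hd, if_pos hfree]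
        exact le_add_of_nonneg_right hsum
      · obtain ⟨B, hB, hne, hc⟩ : ∃ B ∈ 𝒜, B ≠ A ∧ Conflict W A B β := by
          simpa [ConflictFree, hd] using hfree
        rw [if_pos hd, if_neg hfree, zero_add]
        exact (if_pos ⟨hd, hc⟩).ge.trans
          (single_le_sum (fun B _ ↦ hterm B) (mem_erase.mpr ⟨hne, hB⟩))
    · rw [if_neg hd]
      split_ifs <;> positivity
  rw [mul_sub, mul_one, mul_sum, sub_le_iff_le_add, ← hdisj, sum_filter]
  refine (sum_le_sum fun β _ ↦ hpoint β).trans ?_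
  rw [sum_add_distrib, sum_comm, ← sum_filter (ConflictFree 𝒜 W A), ← sum_filter, hdisj]
  gcongr with B
  rw [← sum_filter]
  exact sum_shiftWeight_conflict_le hx W A B

variable {W : Finset V} {𝒜 : Finset (Finset V)} {k N : ℕ} {F : Type*} [Field F] {T d r : ℕ}
  {P : Fin T → Fin d → MvPolynomial V F}

open Classical in
theorem sum_shiftWeight_conflictFree_mul_le (hk : ∀ A ∈ 𝒜, #(A ∩ W) = k)
    (hN : ∀ A ∈ 𝒜, #(A \ W) = N) (hr : ∀ i j, #(P i j).vars ≤ r)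
    (hP : familyPoly F 𝒜 = ∑ i, ∏ j, P i j) {x : ℝ} (hx : 0 ≤ x) (hx1 : x ≤ 1) :
    (∑ A ∈ 𝒜, ∑ β with ConflictFree 𝒜 W A β, shiftWeight x β) * x ^ (k * r) ≤
      (Fintype.card V + 1) * T := by
  let E : Finset (Finset V × Finset V) := {e ∈ 𝒜 ×ˢ univ | ConflictFree 𝒜 W e.1 e.2}
  have hE : ∑ A ∈ 𝒜, ∑ β with ConflictFree 𝒜 W A β, shiftWeight x β =
      ∑ e ∈ E, shiftWeight x e.2 := by
    simp only [E, sum_filter, sum_product]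
  have hmaps : ∀ e ∈ E, #e.2 ∈ range (Fintype.card V + 1) := fun e _ ↦
    mem_range_succ_iff.mpr (card_le_univ _)
  have hfiber : ∀ ℓ ∈ range (Fintype.card V + 1),
      (∑ e ∈ E with #e.2 = ℓ, shiftWeight x e.2) * x ^ (k * r) ≤ T := fun ℓ _ ↦ by
    have hcount : #{e ∈ E | #e.2 = ℓ} ≤ T * #{A : Finset V | #A ≤ ℓ + k * r} :=
      card_conflictFree_le hk hN hr hP fun e he ↦ by simpa [E, and_assoc] using he
    have hball := pow_mul_card_le_of_card_le (V := V) hx hx1 (ℓ + k * r)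
    calc _ = #{e ∈ E | #e.2 = ℓ} * x ^ (ℓ + k * r) / (1 + x) ^ Fintype.card V := by
          rw [sum_congr rfl fun e he ↦ by rw [shiftWeight, (mem_filter.mp he).2], sum_const,
            nsmul_eq_mul, pow_add]
          ring
      _ ≤ (T * #{A : Finset V | #A ≤ ℓ + k * r} : ℕ) * x ^ (ℓ + k * r) /
          (1 + x) ^ Fintype.card V := by gcongr
      _ ≤ T := by
          rw [div_le_iff₀ (by positivity), Nat.cast_mul, mul_assoc, mul_comm (Nat.cast _) (x ^ _)]
          gcongr
  rw [hE, ← sum_fiberwise_of_maps_to hmaps, sum_mul]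
  refine (sum_le_sum hfiber).trans_eq ?_
  rw [sum_const, card_range, nsmul_eq_mul, Nat.cast_add_one]

theorem sum_one_sub_sum_conflictWeight_mul_le (hk : ∀ A ∈ 𝒜, #(A ∩ W) = k)
    (hN : ∀ A ∈ 𝒜, #(A \ W) = N) (hr : ∀ i j, #(P i j).vars ≤ r)
    (hP : familyPoly F 𝒜 = ∑ i, ∏ j, P i j) {x : ℝ} (hx : 0 ≤ x) (hx1 : x ≤ 1) :
    (∑ A ∈ 𝒜, (1 - ∑ B ∈ 𝒜.erase A, conflictWeight W x A B)) *
        ((1 / (1 + x)) ^ N * x ^ (k * r)) ≤ (Fintype.card V + 1) * T := by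
  classical
  refine le_trans ?_ (sum_shiftWeight_conflictFree_mul_le hk hN hr hP hx hx1)
  rw [← mul_assoc, mul_comm (∑ A ∈ 𝒜, _), mul_sum]
  gcongr with A hA
  rw [← hN A hA]
  exact le_sum_shiftWeight_conflictFree hx 𝒜 W A

end ShiftWeight

/-! ## Random restrictions of an MDS code -/

section UnifProb

open Finset
open scoped BigOperators

variable {Ω : Type*} [Fintype Ω]

open Classical in
/-- The probability of the event `p` under the uniform distribution on `Ω`. -/
noncomputable def unifProb (p : Ω → Prop) : ℝ := 𝔼 ω, if p ω then 1 else 0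

theorem unifProb_eq_expect (p : Ω → Prop) [DecidablePred p] :
    unifProb p = 𝔼 ω, if p ω then 1 else 0 := by
  unfold unifProb
  congr!

theorem unifProb_eq_card_div (p : Ω → Prop) [DecidablePred p] :
    unifProb p = #{ω | p ω} / Fintype.card Ω := by
  rw [unifProb_eq_expect, Fintype.expect_eq_sum_div_card, sum_boole]

theorem unifProb_mono {p q : Ω → Prop} (h : ∀ ω, p ω → q ω) : unifProb p ≤ unifProb q := by
  refine expect_le_expect fun ω _ ↦ ?_
  split_ifs with hp hq
  exacts [le_rfl, absurd (h ω hp) hq, zero_le_one, le_rfl]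

theorem unifProb_exists_le {I : Type*} [Fintype I] (p : I → Ω → Prop) :
    unifProb (fun ω ↦ ∃ i, p i ω) ≤ ∑ i, unifProb (p i) := by
  classical
  simp only [unifProb]
  rw [← expect_sum_comm]
  refine expect_le_expect fun ω _ ↦ ?_
  rw [sum_boole]
  split_ifs with h
  · obtain ⟨i, hi⟩ := h
    exact Nat.one_le_cast.mpr (card_pos.mpr ⟨i, (mem_filter_univ i).mpr hi⟩)
  · positivity

theorem unifProb_exists_of_unique {I : Type*} [Fintype I] {p : I → Ω → Prop}
    (hp : ∀ ω i j, p i ω → p j ω → i = j) :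
    unifProb (fun ω ↦ ∃ i, p i ω) = ∑ i, unifProb (p i) := by
  simp only [unifProb]
  rw [← expect_sum_comm]
  refine expect_congr rfl fun ω _ ↦ ?_
  split_ifs with h
  · obtain ⟨i, hi⟩ := h
    rw [Fintype.sum_eq_single i fun j hj ↦ if_neg fun hj' ↦ hj (hp ω j i hj' hi), if_pos hi]
  · exact (sum_eq_zero fun i _ ↦ if_neg fun hi ↦ h ⟨i, hi⟩).symm

theorem unifProb_comp_bijective {Ω' : Type*} [Fintype Ω'] {e : Ω → Ω'} (he : Function.Bijective e)
    (p : Ω' → Prop) : unifProb (fun ω ↦ p (e ω)) = unifProb p :=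
  Fintype.expect_bijective e he _ _ fun _ ↦ rfl

variable {V A : Type*} [Fintype V] [DecidableEq V] [Fintype A] [Nonempty A]

theorem unifProb_forall_mem (S : Finset V) (W : V → Finset A) :
    unifProb (fun σ : V → A ↦ ∀ v ∈ S, σ v ∈ W v) = ∏ v ∈ S, (#(W v) / Fintype.card A : ℝ) := by
  classical
  have hset : ({σ : V → A | ∀ v ∈ S, σ v ∈ W v} : Finset (V → A)) =
      Fintype.piFinset fun v ↦ if v ∈ S then W v else univ := by
    ext σ
    simp only [mem_filter_univ, Fintype.mem_piFinset]
    refine forall_congr' fun v ↦ ?_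
    by_cases hv : v ∈ S <;> simp [hv]
  have hfactor (v : V) : (#(if v ∈ S then W v else univ) / Fintype.card A : ℝ) =
      if v ∈ S then (#(W v) / Fintype.card A : ℝ) else 1 := by
    split_ifs
    · rfl
    · rw [card_univ, div_self (Nat.cast_ne_zero.mpr Fintype.card_ne_zero)]
  rw [unifProb_eq_card_div, hset, Fintype.card_piFinset, Fintype.card_fun, Nat.cast_prod,
    Nat.cast_pow, ← card_univ (α := V), ← prod_const, ← prod_div_distrib,
    prod_congr rfl fun v _ ↦ hfactor v, prod_ite_mem, univ_inter]

theorem unifProb_forall_eq (S : Finset V) (τ : V → A) :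
    unifProb (fun σ : V → A ↦ ∀ v ∈ S, σ v = τ v) = (Fintype.card A : ℝ)⁻¹ ^ #S := by
  simpa using unifProb_forall_mem S fun v ↦ {τ v}

theorem unifProb_forall_eq_and_forall_mem {S U : Finset V} (hSU : Disjoint S U) (τ : V → A)
    (W : V → Finset A) : unifProb (fun σ : V → A ↦ (∀ v ∈ S, σ v = τ v) ∧ ∀ v ∈ U, σ v ∈ W v) =
      (Fintype.card A : ℝ)⁻¹ ^ #S * ∏ v ∈ U, (#(W v) / Fintype.card A : ℝ) := by
  classical
  let W' (v : V) : Finset A := if v ∈ S then {τ v} else W v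
  have hS : ∀ v ∈ S, W' v = {τ v} := fun v hv ↦ if_pos hv
  have hU : ∀ v ∈ U, W' v = W v := fun v hv ↦ if_neg (disjoint_right.mp hSU hv)
  have hevent (σ : V → A) : ((∀ v ∈ S, σ v = τ v) ∧ ∀ v ∈ U, σ v ∈ W v) ↔
      ∀ v ∈ S ∪ U, σ v ∈ W' v := by
    rw [forall_mem_union]
    exact and_congr (forall₂_congr fun v hv ↦ by rw [hS v hv, mem_singleton])
      (forall₂_congr fun v hv ↦ by rw [hU v hv])
  simp only [hevent]
  rw [unifProb_forall_mem, prod_union hSU, prod_congr rfl fun v hv ↦ by rw [hS v hv],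
    prod_congr (s₁ := U) rfl fun v hv ↦ by rw [hU v hv]]
  simp

end UnifProb

section WordGraph

open Finset

variable {ι α : Type*} [Fintype ι] [DecidableEq ι] [DecidableEq α]

/-- The word `a : ι → α` as a set of pairs, one in each row. -/
def wordGraph (a : ι → α) : Finset (ι × α) := univ.image fun i ↦ (i, a i)

theorem mem_wordGraph {a : ι → α} {v : ι × α} : v ∈ wordGraph a ↔ a v.1 = v.2 := by
  simp [wordGraph, Prod.ext_iff]

theorem forall_mem_wordGraph {a : ι → α} {p : ι × α → Prop} :
    (∀ v ∈ wordGraph a, p v) ↔ ∀ i, p (i, a i) := by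
  simp [wordGraph]

theorem filter_wordGraph (a : ι → α) (p : ι × α → Prop) [DecidablePred p] :
    {v ∈ wordGraph a | p v} = ({i | p (i, a i)} : Finset ι).image fun i ↦ (i, a i) :=
  filter_image

theorem card_filter_wordGraph (a : ι → α) (p : ι × α → Prop) [DecidablePred p] :
    #{v ∈ wordGraph a | p v} = #{i | p (i, a i)} := by
  rw [filter_wordGraph, card_image_of_injective _ fun _ _ h ↦ (Prod.mk.inj h).1]

theorem card_wordGraph (a : ι → α) : #(wordGraph a) = Fintype.card ι :=
  card_image_of_injective _ fun _ _ h ↦ (Prod.mk.inj h).1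

theorem wordGraph_injective : Function.Injective (wordGraph : (ι → α) → Finset (ι × α)) :=
  fun a b h ↦ funext fun i ↦ by
    have hi : (i, a i) ∈ wordGraph a := mem_wordGraph.mpr rfl
    exact (mem_wordGraph.mp (h ▸ hi)).symm

theorem card_wordGraph_union (a b : ι → α) :
    #(wordGraph a ∪ wordGraph b) = Fintype.card ι + hammingDist b a := by
  rw [union_comm, ← card_sdiff_add_card, card_wordGraph, sdiff_eq_filter, card_filter_wordGraph,
    add_comm, hammingDist]
  simp only [mem_wordGraph, ne_comm, ne_eq]

end WordGraph

section MDS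

open Finset

variable {Γ ι A : Type*} [Fintype ι] {f : Γ → ι → A} {D : ℕ}

/-- The code with encoding map `f` is maximum distance separable of dimension `D`: any `D` symbols
of a codeword are arbitrary and determine it. -/
structure IsMDS (f : Γ → ι → A) (D : ℕ) : Prop where
  card_le : D ≤ Fintype.card ι
  bijective : ∀ J : Finset ι, #J = D → Function.Bijective fun c (i : J) ↦ f c i

theorem IsMDS.injective (hf : IsMDS f D) : Function.Injective f := fun c c' h ↦ by
  obtain ⟨J, -, hJ⟩ := exists_subset_card_eq (s := (univ : Finset ι)) hf.card_le
  exact (hf.bijective J hJ).1 (funext fun i ↦ congrFun h i)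

variable [Fintype Γ] [Fintype A]

theorem IsMDS.card_eq (hf : IsMDS f D) : Fintype.card Γ = Fintype.card A ^ D := by
  classical
  obtain ⟨J, -, hJ⟩ := exists_subset_card_eq (s := (univ : Finset ι)) hf.card_le
  rw [Fintype.card_of_bijective (hf.bijective J hJ), Fintype.card_fun, Fintype.card_coe, hJ]

variable [Nonempty A]

theorem IsMDS.unifProb_forall_mem (hf : IsMDS f D) {J : Finset ι} (hJ : #J ≤ D)
    (W : ι → Finset A) :
    unifProb (fun c ↦ ∀ i ∈ J, f c i ∈ W i) = ∏ i ∈ J, (#(W i) / Fintype.card A : ℝ) := by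
  classical
  obtain ⟨J', hJJ', -, hJ'⟩ := exists_subsuperset_card_eq (subset_univ J) hJ hf.card_le
  have hevent (c : Γ) : (∀ i ∈ J, f c i ∈ W i) ↔
      ∀ i ∈ J.subtype (· ∈ J'), (fun i : J' ↦ f c i) i ∈ W i := by
    simp only [mem_subtype, Subtype.forall]
    exact ⟨fun h i _ hi ↦ h i hi, fun h i hi ↦ h i (hJJ' hi) hi⟩
  simp only [hevent]
  rw [unifProb_comp_bijective (hf.bijective J' hJ')
    fun τ : J' → A ↦ ∀ i ∈ J.subtype (· ∈ J'), τ i ∈ W i, _root_.unifProb_forall_mem,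
    prod_subtype_of_mem (fun i ↦ (#(W i) / Fintype.card A : ℝ)) fun i hi ↦ hJJ' hi]

theorem IsMDS.unifProb_forall_eq_le (hf : IsMDS f D) (J : Finset ι) (τ : ι → A) :
    unifProb (fun c ↦ ∀ i ∈ J, f c i = τ i) ≤
      (Fintype.card A : ℝ)⁻¹ ^ #J + (Fintype.card A : ℝ)⁻¹ ^ D := by
  have heq {J : Finset ι} (hJ : #J ≤ D) :
      unifProb (fun c ↦ ∀ i ∈ J, f c i = τ i) = (Fintype.card A : ℝ)⁻¹ ^ #J := by
    simpa using hf.unifProb_forall_mem hJ fun i ↦ {τ i}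
  rcases le_total #J D with hJ | hJ
  · rw [heq hJ]
    exact le_add_of_nonneg_right (by positivity)
  · obtain ⟨J', hJ'J, hJ'⟩ := exists_subset_card_eq hJ
    refine (unifProb_mono fun c h i hi ↦ h i (hJ'J hi)).trans ?_
    rw [heq hJ'.le, hJ']
    exact le_add_of_nonneg_left (by positivity)

end MDS

section ReedSolomon

open Finset

variable {q n D : ℕ}

/-- The Reed–Solomon encoding: the values at `0, …, n - 1` of the polynomial with coefficients
`c`. -/
def reedSolomon (q n D : ℕ) (c : Fin D → ZMod q) (i : Fin n) : ZMod q :=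
  ∑ k : Fin D, c k * ((i : ℕ) : ZMod q) ^ (k : ℕ)

theorem isMDS_reedSolomon [Fact q.Prime] (hD : D ≤ n) (hn : n ≤ q) :
    IsMDS (reedSolomon q n D) D where
  card_le := by simpa using hD
  bijective J hJ := by
    have hcast : Function.Injective fun i : Fin n ↦ ((i : ℕ) : ZMod q) := fun i j hij ↦ by
      have hmod := (ZMod.natCast_eq_natCast_iff' _ _ _).mp hij
      rw [Nat.mod_eq_of_lt (i.2.trans_le hn), Nat.mod_eq_of_lt (j.2.trans_le hn)] at hmod
      exact Fin.ext hmod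
    refine (Fintype.bijective_iff_injective_and_card _).mpr ⟨fun c c' h ↦ ?_, by simp [hJ]⟩
    let e : Fin D ≃ J := (J.equivFinOfCardEq hJ).symm
    have hvanish (j : Fin D) : ∑ k, (c - c') k * ((e j : Fin n) : ZMod q) ^ (k : ℕ) = 0 := by
      simp only [Pi.sub_apply, sub_mul, sum_sub_distrib, sub_eq_zero]
      exact congrFun h (e j)
    exact sub_eq_zero.mp (Matrix.eq_zero_of_forall_index_sum_mul_pow_eq_zero
      (hcast.comp (Subtype.val_injective.comp e.injective)) hvanish)

end ReedSolomon

section RestrictedCode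

open Finset

variable {Γ ι α A : Type*} [Fintype ι]

/-- The proportion of codewords among all words, for a code with message space `Γ`, coordinates
`ι` and alphabet `A`. -/
noncomputable def codeDensity (Γ ι A : Type*) [Fintype Γ] [Fintype ι] [Fintype A] : ℝ :=
  Fintype.card Γ * (Fintype.card A : ℝ)⁻¹ ^ Fintype.card ι

theorem codeDensity_nonneg [Fintype Γ] [Fintype A] : 0 ≤ codeDensity Γ ι A := by
  unfold codeDensity; positivity

variable [DecidableEq ι] [Fintype α]

open Classical in
/-- The words along which `σ` spells a codeword of `f`. -/
noncomputable def restrictedCode (f : Γ → ι → A) (σ : ι × α → A) : Finset (ι → α) :=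
  {a | ∃ c, ∀ i, σ (i, a i) = f c i}

theorem mem_restrictedCode {f : Γ → ι → A} {σ : ι × α → A} {a : ι → α} :
    a ∈ restrictedCode f σ ↔ ∃ c, ∀ i, σ (i, a i) = f c i := by
  simp [restrictedCode]

variable [Fintype Γ] [Fintype A] [DecidableEq α] [Nonempty A] {f : Γ → ι → A} {D : ℕ}

theorem unifProb_mem_restrictedCode (hf : Function.Injective f) (a : ι → α) :
    unifProb (fun σ ↦ a ∈ restrictedCode f σ) = codeDensity Γ ι A := by
  simp only [mem_restrictedCode]
  rw [unifProb_exists_of_unique fun σ c c' h h' ↦ hf (funext fun i ↦ (h i).symm.trans (h' i))]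
  have hterm (c : Γ) := unifProb_forall_eq (wordGraph a) fun v ↦ f c v.1
  simp only [forall_mem_wordGraph, card_wordGraph] at hterm
  simp [hterm, codeDensity]

theorem unifProb_pair_mem_restrictedCode_le (hf : IsMDS f D) (a b : ι → α) :
    unifProb (fun σ ↦ a ∈ restrictedCode f σ ∧ b ∈ restrictedCode f σ) ≤
      codeDensity Γ ι A * (codeDensity Γ ι A + (Fintype.card A : ℝ)⁻¹ ^ hammingDist b a) := by
  classical
  let y : ℝ := (Fintype.card A : ℝ)⁻¹
  let J : Finset ι := {i | b i = a i}
  have hJ : #J + hammingDist b a = Fintype.card ι := card_filter_add_card_filter_not _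
  have hpair (c c' : Γ) : unifProb (fun σ : ι × α → A ↦
        (∀ i, σ (i, a i) = f c i) ∧ ∀ i, σ (i, b i) = f c' i) ≤
      y ^ (Fintype.card ι + hammingDist b a) * if ∀ i ∈ J, f c' i = f c i then 1 else 0 := by
    split_ifs with hagree
    · rw [mul_one, ← card_wordGraph_union, ← unifProb_forall_eq _
        fun v ↦ if v ∈ wordGraph a then f c v.1 else f c' v.1]
      refine unifProb_mono fun σ hσ v hv ↦ ?_
      split_ifs with hva
      · exact (forall_mem_wordGraph (p := fun v ↦ σ v = f c v.1)).mpr hσ.1 v hva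
      · exact (forall_mem_wordGraph (p := fun v ↦ σ v = f c' v.1)).mpr hσ.2 v
          ((mem_union.mp hv).resolve_left hva)
    · refine (unifProb_mono (q := fun _ ↦ False) fun σ hσ ↦ hagree fun i hi ↦ ?_).trans
        (by simp [unifProb])
      rw [← hσ.1 i, ← hσ.2 i, (mem_filter.mp hi).2]
  have hcard : Fintype.card Γ * y ^ D = 1 := by
    rw [hf.card_eq, Nat.cast_pow, ← mul_pow, mul_inv_cancel₀ (by simp), one_pow]
  calc _ ≤ ∑ c, ∑ c', unifProb (fun σ : ι × α → A ↦
        (∀ i, σ (i, a i) = f c i) ∧ ∀ i, σ (i, b i) = f c' i) := by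
        rw [← Fintype.sum_prod_type']
        refine (unifProb_mono fun σ hσ ↦ ?_).trans (unifProb_exists_le _)
        obtain ⟨⟨c, hc⟩, c', hc'⟩ := hσ.imp mem_restrictedCode.mp mem_restrictedCode.mp
        exact ⟨(c, c'), hc, hc'⟩
    _ ≤ ∑ c, Fintype.card Γ * y ^ (Fintype.card ι + hammingDist b a) *
        unifProb (fun c' ↦ ∀ i ∈ J, f c' i = f c i) := by
        refine sum_le_sum fun c _ ↦ (sum_le_sum fun c' _ ↦ hpair c c').trans_eq ?_
        rw [← mul_sum, unifProb_eq_expect, mul_right_comm, Fintype.card_mul_expect, mul_comm]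
    _ ≤ ∑ _c : Γ, Fintype.card Γ * y ^ (Fintype.card ι + hammingDist b a) *
        (y ^ #J + y ^ D) := by
        gcongr with c
        exact hf.unifProb_forall_eq_le J (f c)
    _ = codeDensity Γ ι A *
        (Fintype.card Γ * y ^ (#J + hammingDist b a) +
          Fintype.card Γ * y ^ D * y ^ hammingDist b a) := by
        rw [sum_const, nsmul_eq_mul, card_univ, codeDensity]
        ring
    _ = _ := by rw [hJ, hcard, one_mul, codeDensity]

theorem unifProb_mem_restrictedCode_and_forall_mem_le (hf : IsMDS f D) (a : ι → α)
    {U : Finset (ι × α)} (hU : #U ≤ D) (W : ι × α → Finset A) :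
    unifProb (fun σ ↦ a ∈ restrictedCode f σ ∧ ∀ v ∈ U, σ v ∈ W v) ≤
      codeDensity Γ ι A * ∏ v ∈ U, (#(W v) / Fintype.card A : ℝ) := by
  classical
  let w (v : ι × α) : ℝ := #(W v) / Fintype.card A
  let J : Finset ι := {i | (i, a i) ∈ U}
  have hUJ : U ∩ wordGraph a = J.image fun i ↦ (i, a i) := by
    rw [inter_comm, ← filter_mem_eq_inter, filter_wordGraph]
  have hinj : Function.Injective fun i ↦ (i, a i) := fun _ _ h ↦ (Prod.mk.inj h).1
  have hJ : #J ≤ D := by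
    rw [← card_image_of_injective J hinj, ← hUJ]
    exact (card_le_card inter_subset_left).trans hU
  have hword (c : Γ) : unifProb (fun σ : ι × α → A ↦
        (∀ i, σ (i, a i) = f c i) ∧ ∀ v ∈ U, σ v ∈ W v) ≤
      (Fintype.card A : ℝ)⁻¹ ^ Fintype.card ι * (∏ v ∈ U \ wordGraph a, w v) *
        if ∀ i ∈ J, f c i ∈ W (i, a i) then 1 else 0 := by
    split_ifs with hJW
    · rw [mul_one, ← card_wordGraph a, ← unifProb_forall_eq_and_forall_mem disjoint_sdiff
        (fun v ↦ f c v.1)]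
      exact unifProb_mono fun σ hσ ↦
        ⟨forall_mem_wordGraph.mpr hσ.1, fun v hv ↦ hσ.2 v (mem_sdiff.mp hv).1⟩
    · refine (unifProb_mono (q := fun _ ↦ False) fun σ hσ ↦ hJW fun i hi ↦ ?_).trans
        (by simp [unifProb])
      exact hσ.1 i ▸ hσ.2 _ (mem_filter.mp hi).2
  calc _ ≤ ∑ c, unifProb (fun σ : ι × α → A ↦
        (∀ i, σ (i, a i) = f c i) ∧ ∀ v ∈ U, σ v ∈ W v) := by
        refine (unifProb_mono fun σ hσ ↦ ?_).trans (unifProb_exists_le _)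
        obtain ⟨c, hc⟩ := mem_restrictedCode.mp hσ.1
        exact ⟨c, hc, hσ.2⟩
    _ ≤ (Fintype.card A : ℝ)⁻¹ ^ Fintype.card ι * (∏ v ∈ U \ wordGraph a, w v) *
        (Fintype.card Γ * unifProb (fun c ↦ ∀ i ∈ J, f c i ∈ W (i, a i))) := by
        refine (sum_le_sum fun c _ ↦ hword c).trans_eq ?_
        rw [← mul_sum, unifProb_eq_expect, Fintype.card_mul_expect]
    _ = codeDensity Γ ι A * ((∏ i ∈ J, w (i, a i)) * ∏ v ∈ U \ wordGraph a, w v) := by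
        rw [hf.unifProb_forall_mem hJ fun i ↦ W (i, a i), codeDensity]
        ring
    _ = _ := by
        rw [← prod_inter_mul_prod_sdiff U (wordGraph a), hUJ, prod_image fun _ _ _ _ h ↦ hinj h]

end RestrictedCode

section HitSet

open Finset

variable {Γ ι α A : Type*} [Fintype ι] [DecidableEq ι] [Fintype α] [DecidableEq A]

/-- The pairs that `σ` sends into `S`. -/
def hitSet (σ : ι × α → A) (S : Finset (ι × A)) : Finset (ι × α) := {v | (v.1, σ v) ∈ S}

theorem mem_hitSet {σ : ι × α → A} {S : Finset (ι × A)} {v : ι × α} :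
    v ∈ hitSet σ S ↔ (v.1, σ v) ∈ S :=
  mem_filter_univ v

variable [Fintype A]

theorem sum_card_filter_mk_mem (S : Finset (ι × A)) : ∑ i, #{c | (i, c) ∈ S} = #S := by
  rw [card_eq_sum_card_fiberwise (f := Prod.fst) (t := univ) (by simp)]
  refine sum_congr rfl fun i _ ↦ ?_
  rw [← card_image_of_injective _ (Prod.mk_right_injective i)]
  congr 1
  ext ⟨j, c⟩
  simp only [mem_image, mem_filter, mem_univ, true_and, Prod.mk.injEq]
  constructor
  · rintro ⟨c', h, rfl, rfl⟩
    exact ⟨h, rfl⟩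
  · rintro ⟨h, rfl⟩
    exact ⟨c, h, rfl, rfl⟩

variable [Fintype Γ] [DecidableEq α] [Nonempty A] {f : Γ → ι → A} {D : ℕ}

theorem unifProb_mem_restrictedCode_and_le_card_hitSet_le (hf : IsMDS f D) {r : ℕ} (hr : r ≤ D)
    (a : ι → α) (S : Finset (ι × A)) :
    unifProb (fun σ ↦ a ∈ restrictedCode f σ ∧ r ≤ #(hitSet σ S)) ≤
      codeDensity Γ ι A * (Fintype.card α * #S / Fintype.card A) ^ r := by
  let W (v : ι × α) : Finset A := {c | (v.1, c) ∈ S}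
  let w (v : ι × α) : ℝ := #(W v) / Fintype.card A
  have hsum : ∑ v, w v = Fintype.card α * #S / Fintype.card A := by
    rw [← sum_card_filter_mk_mem, Fintype.sum_prod_type, Nat.cast_sum, mul_sum, sum_div]
    simp [w, W, mul_div_assoc]
  have hcover (σ : ι × α → A) (hσ : a ∈ restrictedCode f σ ∧ r ≤ #(hitSet σ S)) :
      ∃ p : Fin r ↪ ι × α, a ∈ restrictedCode f σ ∧ ∀ v ∈ univ.map p, σ v ∈ W v := by
    obtain ⟨e⟩ := Function.Embedding.nonempty_of_card_le (α := Fin r) (β := hitSet σ S)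
      (by simpa using hσ.2)
    refine ⟨e.trans (.subtype _), hσ.1, fun v hv ↦ ?_⟩
    obtain ⟨i, -, rfl⟩ := mem_map.mp hv
    exact (mem_filter_univ _).mpr (mem_hitSet.mp (e i).2)
  calc _ ≤ ∑ p : Fin r ↪ ι × α,
        unifProb (fun σ ↦ a ∈ restrictedCode f σ ∧ ∀ v ∈ univ.map p, σ v ∈ W v) :=
        (unifProb_mono hcover).trans (unifProb_exists_le _)
    _ ≤ ∑ p : Fin r ↪ ι × α, codeDensity Γ ι A * ∏ i, w (p i) := by
        refine sum_le_sum fun p _ ↦ ?_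
        rw [← prod_map]
        exact unifProb_mem_restrictedCode_and_forall_mem_le hf a (by simpa using hr) W
    _ ≤ ∑ p : Fin r → ι × α, codeDensity Γ ι A * ∏ i, w (p i) := by
        have hnonneg (p : Fin r → ι × α) : 0 ≤ codeDensity Γ ι A * ∏ i, w (p i) :=
          mul_nonneg codeDensity_nonneg (prod_nonneg fun i _ ↦ by positivity)
        exact (sum_map univ ⟨_, DFunLike.coe_injective⟩ _).symm.trans_le
          (sum_le_sum_of_subset_of_nonneg (subset_univ _) fun p _ _ ↦ hnonneg p)
    _ = _ := by rw [← mul_sum, ← Fintype.sum_pow, hsum]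

end HitSet

section WordWeights

open Finset

variable {ι α : Type*} [Fintype ι] [DecidableEq ι] [Fintype α] [DecidableEq α]
  (K : Finset ι) (a : ι → α)

theorem sum_prod_mul_pow_le {g : ι → α → ℝ} (hg : ∀ i j, 0 ≤ g i j) {z : ℝ} (hz : 0 ≤ z) :
    ∑ b : ι → α, (∏ i ∈ K, g i (b i)) * z ^ #{i ∈ Kᶜ | b i ≠ a i} ≤
      (∏ i ∈ K, ∑ j, g i j) * (1 + Fintype.card α * z) ^ #Kᶜ := by
  let h (i : ι) (j : α) : ℝ := if i ∈ K then g i j else if j ≠ a i then z else 1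
  have hK {i : ι} (hi : i ∈ K) (j : α) : h i j = g i j := if_pos hi
  have hKc {i : ι} (hi : i ∈ Kᶜ) (j : α) : h i j = if j ≠ a i then z else 1 :=
    if_neg (mem_compl.mp hi)
  have hterm (b : ι → α) :
      (∏ i ∈ K, g i (b i)) * z ^ #{i ∈ Kᶜ | b i ≠ a i} = ∏ i, h i (b i) := by
    rw [← prod_mul_prod_compl K, ← prod_const, prod_filter,
      prod_congr rfl fun i hi ↦ hK hi (b i), prod_congr rfl fun i hi ↦ hKc hi (b i)]
  have hrow {i : ι} (hi : i ∈ Kᶜ) : ∑ j, h i j ≤ 1 + Fintype.card α * z :=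
    calc ∑ j, h i j ≤ ∑ j, ((if j = a i then 1 else 0) + z) := by
          refine sum_le_sum fun j _ ↦ ?_
          rw [hKc hi]
          split_ifs <;> simp_all
      _ = 1 + Fintype.card α * z := by simp [sum_add_distrib]
  have hnonneg {i : ι} (hi : i ∈ Kᶜ) : 0 ≤ ∑ j, h i j := sum_nonneg fun j _ ↦ by
    rw [hKc hi]
    split_ifs
    exacts [hz, zero_le_one]
  calc _ = (∏ i ∈ K, ∑ j, h i j) * ∏ i ∈ Kᶜ, ∑ j, h i j := by
        rw [sum_congr rfl fun b _ ↦ hterm b, prod_mul_prod_compl, prod_univ_sum,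
          Fintype.piFinset_univ]
    _ ≤ _ := by
        rw [prod_congr rfl fun i hi ↦ sum_congr rfl fun j _ ↦ hK hi j, ← prod_const]
        exact mul_le_mul_of_nonneg_left (prod_le_prod (fun i hi ↦ hnonneg hi) fun i hi ↦ hrow hi)
          (prod_nonneg fun i _ ↦ sum_nonneg fun j _ ↦ hg i j)

theorem sum_ite_forall_eq_pow_le {q : ℝ} (hq : 0 ≤ q) :
    ∑ b : ι → α, (if ∀ i ∈ K, b i = a i then q ^ #{i ∈ Kᶜ | b i ≠ a i} else 0) ≤
      (1 + Fintype.card α * q) ^ #Kᶜ := by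
  have h := sum_prod_mul_pow_le K a (g := fun i j ↦ if j = a i then 1 else 0)
    (fun i j ↦ by split_ifs <;> simp) hq
  refine (sum_le_sum fun b _ ↦ ?_).trans (h.trans_eq (by simp))
  rw [prod_boole]
  split_ifs <;> simp

theorem sum_pow_card_filter_ne_le {p : ℝ} (hp : 0 ≤ p) :
    ∑ b : ι → α, p ^ #{i ∈ Kᶜ | b i ≠ a i} ≤
      (Fintype.card α : ℝ) ^ #K * (1 + Fintype.card α * p) ^ #Kᶜ := by
  simpa using sum_prod_mul_pow_le K a (g := fun _ _ ↦ 1) (fun _ _ ↦ zero_le_one) hp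

theorem sum_erase_pow_hammingDist_le {y : ℝ} (hy : 0 ≤ y) :
    ∑ b ∈ univ.erase a, y ^ hammingDist b a ≤
      (1 + Fintype.card α * y) ^ Fintype.card ι - 1 := by
  have h := sum_pow_card_filter_ne_le ∅ a hy
  simp only [compl_empty, card_empty, pow_zero, one_mul, card_univ] at h
  change ∑ b, y ^ hammingDist b a ≤ _ at h
  rw [← add_sum_erase _ _ (mem_univ a), hammingDist_self, pow_zero] at h
  linarith

theorem conflictWeight_wordGraph (x : ℝ) (b : ι → α) :
    conflictWeight (K ×ˢ univ) x (wordGraph a) (wordGraph b) =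
      (if ∀ i ∈ K, b i = a i then (1 / (1 + x)) ^ #{i ∈ Kᶜ | b i ≠ a i} else 0) +
        (x / (1 + x)) ^ #{i ∈ Kᶜ | b i ≠ a i} := by
  have hinter : wordGraph b ∩ K ×ˢ univ = wordGraph a ∩ K ×ˢ univ ↔ ∀ i ∈ K, b i = a i := by
    simp only [Finset.ext_iff, mem_inter, mem_wordGraph, mem_product, mem_univ, and_true,
      and_congr_left_iff, Prod.forall]
    exact ⟨fun h i hi ↦ ((h i (a i) hi).mpr rfl), fun h i c hi ↦ by rw [h i hi]⟩
  have hcard : #((wordGraph b \ K ×ˢ univ) \ (wordGraph a \ K ×ˢ univ)) =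
      #{i ∈ Kᶜ | b i ≠ a i} := by
    rw [sdiff_eq_filter (wordGraph b), sdiff_eq_filter, filter_filter, card_filter_wordGraph]
    congr 1
    ext i
    simp +contextual [mem_wordGraph, eq_comm]
  simp only [conflictWeight, hinter, hcard]

end WordWeights

section SecondMoment

open Finset

variable {Ω B : Type*} [Fintype Ω] [Nonempty Ω] [Fintype B] [DecidableEq B]

theorem sum_unifProb_mem_sub_le {𝒞 : Ω → Finset B} {w : B → B → ℝ} (hw : ∀ a b, 0 ≤ w a b)
    {Bad : Ω → Prop} {M : ℝ} (hM : 0 ≤ M)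
    (h𝒞 : ∀ ω, ¬ Bad ω → ∑ a ∈ 𝒞 ω, (1 - ∑ b ∈ (𝒞 ω).erase a, w a b) ≤ M) :
    ∑ a, (unifProb (fun ω ↦ a ∈ 𝒞 ω) -
      ∑ b ∈ univ.erase a, w a b * unifProb (fun ω ↦ a ∈ 𝒞 ω ∧ b ∈ 𝒞 ω) -
      unifProb (fun ω ↦ a ∈ 𝒞 ω ∧ Bad ω)) ≤ M := by
  classical
  have hpoint (ω : Ω) : ∑ a, ((if a ∈ 𝒞 ω then (1 : ℝ) else 0) -
      ∑ b ∈ univ.erase a, w a b * (if a ∈ 𝒞 ω ∧ b ∈ 𝒞 ω then 1 else 0) -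
      if a ∈ 𝒞 ω ∧ Bad ω then 1 else 0) ≤ M := by
    have hterm (a : B) : ((if a ∈ 𝒞 ω then (1 : ℝ) else 0) -
        ∑ b ∈ univ.erase a, w a b * (if a ∈ 𝒞 ω ∧ b ∈ 𝒞 ω then 1 else 0) -
        if a ∈ 𝒞 ω ∧ Bad ω then 1 else 0) = if a ∈ 𝒞 ω then
          1 - ∑ b ∈ (𝒞 ω).erase a, w a b - (if Bad ω then 1 else 0) else 0 := by
      have herase : (univ.erase a).filter (· ∈ 𝒞 ω) = (𝒞 ω).erase a := by
        ext b
        simp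
      by_cases ha : a ∈ 𝒞 ω
      · simp only [ha, true_and, if_true, mul_ite, mul_one, mul_zero]
        rw [← sum_filter, herase]
      · simp [ha]
    simp only [hterm]
    rw [sum_ite_mem, univ_inter]
    by_cases hbad : Bad ω
    · refine (sum_nonpos fun a _ ↦ ?_).trans hM
      rw [if_pos hbad, sub_right_comm, sub_self, zero_sub, neg_nonpos]
      exact sum_nonneg fun b _ ↦ hw a b
    · simpa only [if_neg hbad, sub_zero] using h𝒞 ω hbad
  simp only [unifProb_eq_expect, mul_expect, ← expect_sum_comm, ← expect_sub_distrib]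
  exact expect_le univ_nonempty fun ω _ ↦ hpoint ω

end SecondMoment

section RestrictedCodePoly

open Finset

variable {Γ ι α A F : Type*} [Fintype ι] [DecidableEq ι] [Field F]

theorem familyPoly_image_wordGraph [DecidableEq α] (𝒞 : Finset (ι → α)) :
    familyPoly F (𝒞.image wordGraph) = ∑ a ∈ 𝒞, ∏ i, X (i, a i) := by
  rw [familyPoly, sum_image wordGraph_injective.injOn]
  exact sum_congr rfl fun a _ ↦ prod_image fun i _ j _ h ↦ (Prod.mk.inj h).1

variable [Fintype α]

theorem sum_one_sub_sum_conflictWeight_wordGraph_mul_le [DecidableEq α] (K : Finset ι)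
    (𝒞 : Finset (ι → α)) {T d r : ℕ} {P : Fin T → Fin d → MvPolynomial (ι × α) F}
    (hr : ∀ i j, #(P i j).vars ≤ r) (hP : ∑ a ∈ 𝒞, ∏ i, X (i, a i) = ∑ i, ∏ j, P i j)
    {x : ℝ} (hx : 0 ≤ x) (hx1 : x ≤ 1) :
    (∑ a ∈ 𝒞, (1 - ∑ b ∈ 𝒞.erase a,
      conflictWeight (K ×ˢ univ) x (wordGraph a) (wordGraph b))) *
      ((1 / (1 + x)) ^ #Kᶜ * x ^ (#K * r)) ≤ (Fintype.card ι * Fintype.card α + 1) * T := by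
  have hinter (a : ι → α) : #(wordGraph a ∩ K ×ˢ univ) = #K := by
    rw [← filter_mem_eq_inter, card_filter_wordGraph]
    simp
  have hsdiff (a : ι → α) : #(wordGraph a \ K ×ˢ univ) = #Kᶜ := by
    rw [sdiff_eq_filter, card_filter_wordGraph]
    congr 1
    ext i
    simp
  have h := sum_one_sub_sum_conflictWeight_mul_le (𝒜 := 𝒞.image wordGraph) (W := K ×ˢ univ)
    (forall_mem_image.mpr fun a _ ↦ hinter a) (forall_mem_image.mpr fun a _ ↦ hsdiff a) hr
    ((familyPoly_image_wordGraph 𝒞).trans hP) hx hx1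
  simp only [sum_image wordGraph_injective.injOn, ← image_erase wordGraph_injective,
    Fintype.card_prod, Nat.cast_mul] at h
  exact h

variable [DecidableEq A]

/-- The substitution undoing the translation by `a` and replacing each variable by the sum of the
variables that `σ` sends to it. -/
noncomputable def restrictSubst (a : ι × A → F) (σ : ι × α → A) (v : ι × A) :
    MvPolynomial (ι × α) F :=
  C (-a v) + ∑ j with σ (v.1, j) = v.2, X (v.1, j)

theorem vars_bind₁_restrictSubst_subset (a : ι × A → F) (σ : ι × α → A)
    (Q : MvPolynomial (ι × A) F) : (bind₁ (restrictSubst a σ) Q).vars ⊆ hitSet σ Q.vars := by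
  classical
  intro w hw
  obtain ⟨v, hv, hw⟩ := mem_biUnion.mp (vars_bind₁ _ _ hw)
  rcases mem_union.mp (vars_add_subset _ _ hw) with h | h
  · simp at h
  · obtain ⟨j, hj, hwj⟩ := mem_biUnion.mp (vars_sum_subset _ _ h)
    rw [vars_X, mem_singleton] at hwj
    rwa [hwj, mem_hitSet, (mem_filter.mp hj).2]

variable [Fintype Γ] {f : Γ → ι → A}

theorem bind₁_restrictSubst_translate (hf : Function.Injective f) (a : ι × A → F)
    (σ : ι × α → A) :
    bind₁ (restrictSubst a σ) (aeval (fun v ↦ X v + C (a v))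
      (∑ c, ∏ i, (X (i, f c i) : MvPolynomial (ι × A) F))) =
      ∑ b ∈ restrictedCode f σ, ∏ i, X (i, b i) := by
  classical
  have hunion : restrictedCode f σ =
      univ.biUnion fun c ↦ Fintype.piFinset fun i ↦ {j | σ (i, j) = f c i} := by
    ext b
    simp [mem_restrictedCode]
  have hdisj : ((univ : Finset Γ) : Set Γ).PairwiseDisjoint
      fun c ↦ Fintype.piFinset fun i ↦ ({j | σ (i, j) = f c i} : Finset α) := by
    refine fun c _ c' _ hne ↦ disjoint_left.mpr fun b hb hb' ↦ hne (hf (funext fun i ↦ ?_))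
    exact (mem_filter.mp (Fintype.mem_piFinset.mp hb i)).2.symm.trans
      (mem_filter.mp (Fintype.mem_piFinset.mp hb' i)).2
  rw [hunion, sum_biUnion hdisj]
  simp only [map_sum, map_prod, aeval_X, map_add, bind₁_X_right, bind₁_C_right]
  refine sum_congr rfl fun c _ ↦ Eq.trans (prod_congr rfl fun i _ ↦ ?_)
    (prod_univ_sum _ fun i j ↦ X (i, j))
  rw [restrictSubst, C_neg, neg_add_cancel_comm]

end RestrictedCodePoly

section TranslatedCode

open Finset

variable {Γ ι α A F : Type*} [Fintype ι] [DecidableEq ι] [Fintype α]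

theorem sum_erase_add_pow_hammingDist_mul_conflictWeight_le [DecidableEq α] (K : Finset ι)
    (a : ι → α) {κ x y : ℝ} (hκ : 0 ≤ κ) (hx : 0 ≤ x) (hy : 0 ≤ y) :
    ∑ b ∈ univ.erase a, (κ + y ^ hammingDist b a) *
        conflictWeight (K ×ˢ univ) x (wordGraph a) (wordGraph b) ≤
      κ * (1 + Fintype.card α * (1 / (1 + x))) ^ #Kᶜ +
        κ * (Fintype.card α ^ #K * (1 + Fintype.card α * (x / (1 + x))) ^ #Kᶜ) +
        2 * ((1 + Fintype.card α * y) ^ Fintype.card ι - 1) := by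
  let q (b : ι → α) : ℝ :=
    if ∀ i ∈ K, b i = a i then (1 / (1 + x)) ^ #{i ∈ Kᶜ | b i ≠ a i} else 0
  let p (b : ι → α) : ℝ := (x / (1 + x)) ^ #{i ∈ Kᶜ | b i ≠ a i}
  have hq (b : ι → α) : 0 ≤ q b ∧ q b ≤ 1 := by
    simp only [q]
    split_ifs
    · exact ⟨by positivity,
        pow_le_one₀ (by positivity) ((div_le_one (by positivity)).mpr (by linarith))⟩
    · exact ⟨le_rfl, zero_le_one⟩
  have hp (b : ι → α) : 0 ≤ p b ∧ p b ≤ 1 :=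
    ⟨by positivity, pow_le_one₀ (by positivity) ((div_le_one (by positivity)).mpr (by linarith))⟩
  have hsum_q : ∑ b ∈ univ.erase a, q b ≤ (1 + Fintype.card α * (1 / (1 + x))) ^ #Kᶜ :=
    (sum_le_sum_of_subset_of_nonneg (erase_subset _ _) fun b _ _ ↦ (hq b).1).trans
      (sum_ite_forall_eq_pow_le K a (by positivity))
  have hsum_p : ∑ b ∈ univ.erase a, p b ≤
      Fintype.card α ^ #K * (1 + Fintype.card α * (x / (1 + x))) ^ #Kᶜ :=
    (sum_le_sum_of_subset_of_nonneg (erase_subset _ _) fun b _ _ ↦ (hp b).1).trans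
      (sum_pow_card_filter_ne_le K a (by positivity))
  calc _ ≤ ∑ b ∈ univ.erase a, (κ * q b + κ * p b + 2 * y ^ hammingDist b a) := by
        refine sum_le_sum fun b _ ↦ ?_
        rw [conflictWeight_wordGraph]
        change (κ + y ^ hammingDist b a) * (q b + p b) ≤ _
        nlinarith [mul_le_of_le_one_right (pow_nonneg hy (hammingDist b a)) (hq b).2,
          mul_le_of_le_one_right (pow_nonneg hy (hammingDist b a)) (hp b).2]
    _ = κ * ∑ b ∈ univ.erase a, q b + κ * ∑ b ∈ univ.erase a, p b +
        2 * ∑ b ∈ univ.erase a, y ^ hammingDist b a := by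
        simp only [sum_add_distrib, mul_sum]
    _ ≤ _ := by
        gcongr
        exact sum_erase_pow_hammingDist_le a hy

variable [Fintype Γ] [Fintype A] [Nonempty A] {f : Γ → ι → A} {D : ℕ}

theorem sum_erase_conflictWeight_mul_unifProb_le [DecidableEq α] (hf : IsMDS f D) (K : Finset ι)
    (a : ι → α) {x : ℝ} (hx : 0 ≤ x) :
    ∑ b ∈ univ.erase a, conflictWeight (K ×ˢ univ) x (wordGraph a) (wordGraph b) *
        unifProb (fun σ ↦ a ∈ restrictedCode f σ ∧ b ∈ restrictedCode f σ) ≤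
      codeDensity Γ ι A * (codeDensity Γ ι A * (1 + Fintype.card α * (1 / (1 + x))) ^ #Kᶜ +
        codeDensity Γ ι A *
          (Fintype.card α ^ #K * (1 + Fintype.card α * (x / (1 + x))) ^ #Kᶜ) +
        2 * ((1 + Fintype.card α * (Fintype.card A : ℝ)⁻¹) ^ Fintype.card ι - 1)) := by
  refine le_trans ?_ (mul_le_mul_of_nonneg_left
    (sum_erase_add_pow_hammingDist_mul_conflictWeight_le K a codeDensity_nonneg hx
      (inv_nonneg.mpr (Nat.cast_nonneg _))) codeDensity_nonneg)
  rw [mul_sum]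
  refine sum_le_sum fun b _ ↦ ?_
  rw [← mul_assoc, mul_comm]
  exact mul_le_mul_of_nonneg_right (unifProb_pair_mem_restrictedCode_le hf a b)
    (conflictWeight_nonneg _ hx _ _)

theorem unifProb_mem_restrictedCode_and_exists_le [DecidableEq α] [DecidableEq A]
    (hf : IsMDS f D) {r : ℕ} (hr : r ≤ D) (a : ι → α) {I : Type*} [Fintype I]
    {S : I → Finset (ι × A)} {s : ℝ} (hS : ∀ i, #(S i) ≤ s) :
    unifProb (fun σ ↦ a ∈ restrictedCode f σ ∧ ∃ i, r ≤ #(hitSet σ (S i))) ≤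
      codeDensity Γ ι A *
        (Fintype.card I * (Fintype.card α * s / Fintype.card A) ^ r) := by
  calc _ ≤ ∑ i, unifProb (fun σ ↦ a ∈ restrictedCode f σ ∧ r ≤ #(hitSet σ (S i))) :=
        (unifProb_mono fun σ h ↦ exists_and_left.mpr h).trans (unifProb_exists_le _)
    _ ≤ ∑ _i : I, codeDensity Γ ι A * (Fintype.card α * s / Fintype.card A) ^ r := by
        gcongr with i
        refine (unifProb_mem_restrictedCode_and_le_card_hitSet_le hf hr a (S i)).trans ?_
        have := codeDensity_nonneg (Γ := Γ) (ι := ι) (A := A)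
        gcongr
        exact hS i
    _ = _ := by
        rw [sum_const, card_univ, nsmul_eq_mul]
        ring

variable (α) in
theorem codeDensity_mul_le_of_translate_eq [Field F] (hf : IsMDS f D) {r : ℕ} (hr : r ≤ D)
    (K : Finset ι) (a : ι × A → F) {T d : ℕ} {Q : Fin T → Fin d → MvPolynomial (ι × A) F}
    {s : ℝ} (hs : ∀ i j, #(Q i j).vars ≤ s)
    (hQ : aeval (fun v ↦ X v + C (a v))
      (∑ c, ∏ i, (X (i, f c i) : MvPolynomial (ι × A) F)) = ∑ i, ∏ j, Q i j)
    {x : ℝ} (hx : 0 < x) (hx1 : x ≤ 1)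
    (hrow : codeDensity Γ ι A * (1 + Fintype.card α * (1 / (1 + x))) ^ #Kᶜ ≤ 1 / 8)
    (hcol : codeDensity Γ ι A *
      (Fintype.card α ^ #K * (1 + Fintype.card α * (x / (1 + x))) ^ #Kᶜ) ≤ 1 / 8)
    (hcollision : (1 + Fintype.card α * (Fintype.card A : ℝ)⁻¹) ^ Fintype.card ι - 1 ≤ 1 / 16)
    (hbad : (T * d : ℕ) * (Fintype.card α * s / Fintype.card A) ^ r ≤ 1 / 8) :
    Fintype.card α ^ Fintype.card ι * codeDensity Γ ι A *
      ((1 / (1 + x)) ^ #Kᶜ * x ^ (#K * r)) ≤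
      2 * (Fintype.card ι * Fintype.card α + 1) * T := by
  classical
  let Bad (σ : ι × α → A) : Prop :=
    ∃ p : Fin T × Fin d, r ≤ #(hitSet σ (Q p.1 p.2).vars)
  let M : ℝ := (Fintype.card ι * Fintype.card α + 1) * T / ((1 / (1 + x)) ^ #Kᶜ * x ^ (#K * r))
  have hκ := codeDensity_nonneg (Γ := Γ) (ι := ι) (A := A)
  have hgood (σ : ι × α → A) (hσ : ¬ Bad σ) : ∑ b ∈ restrictedCode f σ,
      (1 - ∑ b' ∈ (restrictedCode f σ).erase b,
        conflictWeight (K ×ˢ univ) x (wordGraph b) (wordGraph b')) ≤ M := by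
    simp only [Bad, Prod.exists, not_exists, not_le] at hσ
    refine (le_div_iff₀ (by positivity)).mpr
      (sum_one_sub_sum_conflictWeight_wordGraph_mul_le K (restrictedCode f σ)
        (P := fun i j ↦ bind₁ (restrictSubst a σ) (Q i j)) (fun i j ↦
          (card_le_card (vars_bind₁_restrictSubst_subset a σ (Q i j))).trans (hσ i j).le)
        ?_ hx.le hx1)
    rw [← bind₁_restrictSubst_translate hf.injective a σ, hQ]
    simp only [map_sum, map_prod]
  have hword (b : ι → α) : codeDensity Γ ι A / 2 ≤ unifProb (fun σ ↦ b ∈ restrictedCode f σ) -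
      ∑ b' ∈ univ.erase b, conflictWeight (K ×ˢ univ) x (wordGraph b) (wordGraph b') *
        unifProb (fun σ ↦ b ∈ restrictedCode f σ ∧ b' ∈ restrictedCode f σ) -
      unifProb (fun σ ↦ b ∈ restrictedCode f σ ∧ Bad σ) := by
    have hpair := sum_erase_conflictWeight_mul_unifProb_le hf K b hx.le
    have hb := unifProb_mem_restrictedCode_and_exists_le hf hr b
      (S := fun p : Fin T × Fin d ↦ (Q p.1 p.2).vars) fun p ↦ hs p.1 p.2
    rw [Fintype.card_prod, Fintype.card_fin, Fintype.card_fin] at hb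
    rw [unifProb_mem_restrictedCode hf.injective]
    nlinarith
  have hcount := (sum_le_sum fun b _ ↦ hword b).trans (sum_unifProb_mem_sub_le
    (fun b b' ↦ conflictWeight_nonneg _ hx.le _ _) (by positivity) hgood)
  rw [sum_const, card_univ, Fintype.card_fun, nsmul_eq_mul, Nat.cast_pow,
    le_div_iff₀ (by positivity)] at hcount
  linarith

end TranslatedCode

/-! ## The choice of parameters -/

section Scale

theorem one_add_pow_le_pow_mul_exp {t : ℝ} (ht : 0 < t) (N : ℕ) :
    (1 + t) ^ N ≤ t ^ N * Real.exp (N / t) := by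
  have hbase : 1 + t ≤ t * Real.exp (1 / t) :=
    calc 1 + t = t * (1 / t + 1) := by field_simp
      _ ≤ _ := mul_le_mul_of_nonneg_left (Real.add_one_le_exp _) ht.le
  calc (1 + t) ^ N ≤ (t * Real.exp (1 / t)) ^ N := by gcongr
    _ = _ := by rw [mul_pow, ← Real.exp_nat_mul, mul_one_div]

theorem mul_one_add_pow_le_one_div_eight {κ t : ℝ} {N : ℕ} (hκ : 0 ≤ κ) (ht : 0 < t)
    (hN : N ≤ 3 * t) (h : κ * t ^ N ≤ 1 / 200) : κ * (1 + t) ^ N ≤ 1 / 8 := by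
  have hexp : Real.exp (N / t) ≤ 25 :=
    calc Real.exp (N / t) ≤ Real.exp ((3 : ℕ) * 1) := by
          rw [Real.exp_le_exp, div_le_iff₀ ht]
          push_cast
          linarith
      _ = Real.exp 1 ^ 3 := Real.exp_nat_mul 1 3
      _ ≤ 2.8 ^ 3 := by
          gcongr
          linarith [Real.exp_one_lt_d9]
      _ ≤ 25 := by norm_num
  calc κ * (1 + t) ^ N ≤ κ * (t ^ N * Real.exp (N / t)) := by
        gcongr
        exact one_add_pow_le_pow_mul_exp ht N
    _ = κ * t ^ N * Real.exp (N / t) := (mul_assoc _ _ _).symm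
    _ ≤ 1 / 200 * 25 := by gcongr
    _ = 1 / 8 := by norm_num

theorem exists_nat_mul_pow_mem {κ q ε : ℝ} {a b N : ℕ} (hκ : 0 ≤ κ) (hq : 0 ≤ q) (ha : 0 < a)
    (hN : N ≤ a) (hab : a ≤ b) (hlo : κ * (a * q) ^ N ≤ ε) (hhi : ε < κ * (b * q) ^ N) :
    ∃ m : ℕ, a ≤ m ∧ m ≤ b ∧ κ * (m * q) ^ N ≤ ε ∧ ε ≤ 3 * (κ * (m * q) ^ N) := by
  classical
  let p (m : ℕ) : Prop := κ * (m * q) ^ N ≤ ε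
  let m := Nat.findGreatest p b
  have ham : a ≤ m := Nat.le_findGreatest hab hlo
  have hmb : m ≤ b := Nat.findGreatest_le b
  have hm : p m := Nat.findGreatest_spec hab hlo
  have hmb' : m ≠ b := fun h ↦ hhi.not_ge (h ▸ hm)
  have hsucc : ¬ p (m + 1) := Nat.findGreatest_is_greatest m.lt_succ_self (by omega)
  have hm0 : (0 : ℝ) < m := Nat.cast_pos.mpr (ha.trans_le ham)
  have hgrowth : (1 + m : ℝ) ^ N ≤ m ^ N * 3 := by
    have hexp : Real.exp (N / m) ≤ 3 := by
      have hNm : (N / m : ℝ) ≤ 1 := (div_le_one hm0).mpr (Nat.cast_le.mpr (hN.trans ham))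
      linarith [Real.exp_le_exp.mpr hNm, Real.exp_one_lt_d9]
    exact (one_add_pow_le_pow_mul_exp hm0 N).trans (by gcongr)
  refine ⟨m, ham, hmb, hm, (not_le.mp hsucc).le.trans ?_⟩
  calc κ * (((m + 1 : ℕ) : ℝ) * q) ^ N = κ * ((1 + m) ^ N * q ^ N) := by
        rw [mul_pow, Nat.cast_add_one, add_comm]
    _ ≤ κ * (m ^ N * 3 * q ^ N) := by gcongr
    _ = _ := by ring

theorem exp_neg_le_one_div {t c : ℝ} (hc : 0 < c) (h : c ≤ t) : Real.exp (-t) ≤ 1 / c := by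
  rw [Real.exp_neg, ← one_div]
  exact one_div_le_one_div_of_le hc (by linarith [Real.add_one_le_exp t])

end Scale

section Large

variable {n : ℕ}

/-- The lower bounds on `n` under which the estimates on the parameters hold. -/
structure IsLarge (n : ℕ) : Prop where
  le_sqrt : 1000 ≤ √(n : ℝ)
  le_log : 16 ≤ Real.log n
  log_le : Real.log n ≤ √n / 2

theorem eventually_isLarge : ∀ᶠ n : ℕ in Filter.atTop, IsLarge n := by
  have hlog : ∀ᶠ n : ℕ in Filter.atTop, 16 ≤ Real.log n :=
    (Real.tendsto_log_atTop.comp tendsto_natCast_atTop_atTop).eventually_ge_atTop 16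
  have hsqrt : ∀ᶠ n : ℕ in Filter.atTop, 1000 ≤ √(n : ℝ) :=
    (Real.tendsto_sqrt_atTop.comp tendsto_natCast_atTop_atTop).eventually_ge_atTop 1000
  have hlogsqrt : ∀ᶠ x : ℝ in Filter.atTop, ‖Real.log x‖ ≤ 1 / 2 * ‖x ^ (1 / 2 : ℝ)‖ :=
    (isLittleO_log_rpow_atTop one_half_pos).bound one_half_pos
  filter_upwards [hlog, hsqrt, tendsto_natCast_atTop_atTop.eventually hlogsqrt] with n h₁ h₂ h₃
  refine ⟨h₂, h₁, (Real.le_norm_self _).trans (h₃.trans_eq ?_)⟩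
  rw [← Real.sqrt_eq_rpow, Real.norm_of_nonneg (Real.sqrt_nonneg _)]
  ring

theorem IsLarge.le_cast (hn : IsLarge n) : (1000000 : ℝ) ≤ n := by
  nlinarith [hn.le_sqrt, Real.mul_self_sqrt n.cast_nonneg]

theorem IsLarge.exp_nat_mul_log (hn : IsLarge n) (k : ℕ) :
    Real.exp (k * Real.log n) = (n : ℝ) ^ k := by
  rw [Real.exp_nat_mul, Real.exp_log (by linarith [hn.le_cast])]

theorem IsLarge.exp_neg_mul_pow_le (hn : IsLarge n) {c : ℝ}
    (hc : 3 / 2 * n * Real.log n - n ≤ c) {N : ℕ} (hN : N ≤ n) :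
    Real.exp (-c) * (n : ℝ) ^ N ≤ 1 / 200 := by
  rw [← hn.exp_nat_mul_log, ← Real.exp_add, neg_add_eq_sub, ← neg_sub]
  refine exp_neg_le_one_div (by norm_num) ?_
  have hNL : (N : ℝ) * Real.log n ≤ n * Real.log n := by
    have := hn.le_log
    gcongr
  nlinarith [hn.le_log, hn.le_cast]

theorem IsLarge.lt_exp_neg_mul_pow (hn : IsLarge n) {c : ℝ}
    (hc : c ≤ 3 / 2 * n * Real.log n + 2 * n) {k : ℕ} (hk : (k : ℝ) ≤ √n) (hkn : k ≤ n) :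
    1 / 200 < Real.exp (-c) * ((n : ℝ) ^ 2 / 2) ^ (n - k) := by
  have hbase : Real.exp (2 * Real.log n - 1) ≤ (n : ℝ) ^ 2 / 2 := by
    rw [Real.exp_sub, ← hn.exp_nat_mul_log 2, Nat.cast_two]
    gcongr
    linarith [Real.add_one_le_exp 1]
  have hexponent : c ≤ (n - k) * (2 * Real.log n - 1) := by
    have hL := hn.le_log
    have hS := hn.le_sqrt
    have hSS : √(n : ℝ) * √n = n := Real.mul_self_sqrt n.cast_nonneg
    calc c ≤ 3 / 2 * n * Real.log n + 2 * n := hc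
      _ ≤ (n - √n) * (2 * Real.log n - 1) := by
          have hnL : (n : ℝ) * 16 ≤ n * Real.log n := by gcongr
          have hSL : 8 * √(n : ℝ) * Real.log n ≤ √n * √n * Real.log n := by
            gcongr
            linarith
          rw [hSS] at hSL
          nlinarith
      _ ≤ _ := by
          gcongr
          linarith
  calc (1 : ℝ) / 200 < 1 := by norm_num
    _ ≤ Real.exp (-c) * Real.exp (((n - k : ℕ) : ℝ) * (2 * Real.log n - 1)) := by
        rw [← Real.exp_add, Nat.cast_sub hkn]
        exact Real.one_le_exp (by linarith)
    _ ≤ _ := by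
        rw [Real.exp_nat_mul]
        gcongr

theorem IsLarge.exists_bias (hn : IsLarge n) {k r : ℕ} (hkr : 4 * k ≤ r) (hr : (r : ℝ) ≤ √n) :
    ∃ x : ℝ, 1 / 2 ≤ x ∧ x ≤ 1 ∧ ((n : ℝ) ^ 2) ^ k * x ^ (n - k) ≤ 1 ∧
      Real.exp (-(2 * k * Real.log n / 3)) ≤ x ^ (k * r) := by
  have hL := hn.le_log
  have hS := hn.le_sqrt
  have hSS : √(n : ℝ) * √n = n := Real.mul_self_sqrt n.cast_nonneg
  have hkS : (k : ℝ) ≤ √n / 4 := by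
    have : 4 * (k : ℝ) ≤ r := mod_cast hkr
    linarith
  have hkn : k ≤ n := by
    rw [← Nat.cast_le (α := ℝ)]
    nlinarith
  have hNk : ((n - k : ℕ) : ℝ) = n - k := Nat.cast_sub hkn
  set N := n - k
  have hN : 3 / 4 * (n : ℝ) ≤ N := by nlinarith
  have hN0 : (0 : ℝ) < N := by linarith [hn.le_cast]
  set e := 2 * k * Real.log n / N with he
  have heN : N * e = 2 * k * Real.log n := mul_div_cancel₀ _ hN0.ne'
  have he0 : 0 ≤ e := by positivity
  have he1 : e ≤ 1 / 3 := by
    rw [he, div_le_div_iff₀ hN0 (by norm_num)]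
    have : (k : ℝ) * Real.log n ≤ √n / 4 * (√n / 2) := by
      have := hn.log_le
      gcongr
    linarith
  have hkrN : (k : ℝ) * r ≤ N / 3 := by
    have : (k : ℝ) * r ≤ √n / 4 * √n := by gcongr
    linarith
  refine ⟨Real.exp (-e), by linarith [Real.add_one_le_exp (-e)],
    Real.exp_le_one_iff.mpr (by linarith), le_of_eq ?_, ?_⟩
  · rw [← pow_mul, ← hn.exp_nat_mul_log, ← Real.exp_nat_mul, ← Real.exp_add, Real.exp_eq_one_iff]
    push_cast
    linarith
  · rw [← Real.exp_nat_mul, Real.exp_le_exp, Nat.cast_mul]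
    linarith [mul_le_mul_of_nonneg_right hkrN he0]

/-- The conditions on the parameters of a random restriction of a code of length `n` and density
`κ` to an alphabet of size `m`: `k` is the order of the derivatives, `r = ⌊√n⌋` bounds the number
of variables that survive in a factor, and `x` is the bias of the shifts. The first two estimates
bound the expected number of conflicts within a row and between rows, the last one compares the
two bounds on the dimension of the shifted partial derivatives. -/
structure RestrictionParameters (n : ℕ) (κ : ℝ) (k m : ℕ) (x : ℝ) : Prop where
  le_length : k ≤ n
  le_sq : m ≤ n ^ 2
  pos : 0 < x
  le_one : x ≤ 1
  row_le : κ * (1 + m * (1 / (1 + x))) ^ (n - k) ≤ 1 / 8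
  col_le : κ * (m ^ k * (1 + m * (x / (1 + x))) ^ (n - k)) ≤ 1 / 8
  gain : 2 * (n * m + 1) * Real.exp (Real.log n * √n / 48) ≤
    m ^ n * κ * ((1 / (1 + x)) ^ (n - k) * x ^ (k * n.sqrt))

theorem IsLarge.two_mul_exp_le (hn : IsLarge n) {k m : ℕ} (hk : √(n : ℝ) ≤ 4 * k + 4)
    (hm : m ≤ n ^ 2) :
    2 * (n * m + 1) * Real.exp (Real.log n * √n / 48) ≤
      1 / 600 * Real.exp (k * Real.log n / 3) := by
  have hn0 := hn.le_cast
  have hm' : (m : ℝ) ≤ n ^ 2 := mod_cast hm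
  have hpoly : 2 * (n * m + 1) ≤ 1 / 600 * (n : ℝ) ^ 4 :=
    calc 2 * (n * m + 1) ≤ 2 * (n * n ^ 2 + n ^ 3 : ℝ) := by
          gcongr
          exact one_le_pow₀ (by linarith)
      _ = 4 * (n : ℝ) ^ 3 := by ring
      _ ≤ 1 / 600 * n * (n : ℝ) ^ 3 := by
          gcongr
          linarith
      _ = _ := by ring
  calc 2 * (n * m + 1) * Real.exp (Real.log n * √n / 48)
      ≤ 1 / 600 * (n : ℝ) ^ 4 * Real.exp (Real.log n * √n / 48) := by gcongr
    _ = 1 / 600 * Real.exp ((4 + √n / 48) * Real.log n) := by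
        rw [← hn.exp_nat_mul_log, mul_assoc, ← Real.exp_add]
        congr 2
        push_cast
        ring
    _ ≤ 1 / 600 * Real.exp (k / 3 * Real.log n) := by
        have := hn.le_log
        have := hn.le_sqrt
        gcongr
        linarith
    _ = _ := by ring_nf

theorem IsLarge.two_mul_exp_le_gain (hn : IsLarge n) {κ x : ℝ} {k m r : ℕ}
    (hk : √(n : ℝ) ≤ 4 * k + 4) (hkn : k ≤ n) (hnm : n ≤ m) (hm : m ≤ n ^ 2)
    (hκm : 1 / 600 ≤ κ * (m * (1 / (1 + x))) ^ (n - k))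
    (hxk : Real.exp (-(2 * k * Real.log n / 3)) ≤ x ^ (k * r)) :
    2 * (n * m + 1) * Real.exp (Real.log n * √n / 48) ≤
      m ^ n * κ * ((1 / (1 + x)) ^ (n - k) * x ^ (k * r)) := by
  have hnm' : (n : ℝ) ≤ m := mod_cast hnm
  refine (hn.two_mul_exp_le hk hm).trans ?_
  calc 1 / 600 * Real.exp (k * Real.log n / 3)
      = 1 / 600 * ((n : ℝ) ^ k * Real.exp (-(2 * k * Real.log n / 3))) := by
        rw [← hn.exp_nat_mul_log, ← Real.exp_add]
        ring_nf
    _ ≤ κ * (m * (1 / (1 + x))) ^ (n - k) * (m ^ k * x ^ (k * r)) :=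
        mul_le_mul hκm (by gcongr) (by positivity) (by linarith)
    _ = m ^ k * m ^ (n - k) * κ * ((1 / (1 + x)) ^ (n - k) * x ^ (k * r)) := by
        rw [mul_pow]
        ring
    _ = _ := by rw [pow_mul_pow_sub _ hkn]

theorem IsLarge.exists_alphabet_card (hn : IsLarge n) {c : ℝ}
    (hlo : 3 / 2 * n * Real.log n - n ≤ c) (hup : c ≤ 3 / 2 * n * Real.log n + 2 * n) {k : ℕ}
    (hk : (k : ℝ) ≤ √n) (hkn : k ≤ n) {q : ℝ} (hq : 1 / 2 ≤ q) (hq1 : q ≤ 1) :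
    ∃ m : ℕ, n ≤ m ∧ m ≤ n ^ 2 ∧ Real.exp (-c) * (m * q) ^ (n - k) ≤ 1 / 200 ∧
      1 / 600 ≤ Real.exp (-c) * (m * q) ^ (n - k) := by
  have hn0 : 0 < n := Nat.cast_pos.mp (by linarith [hn.le_cast] : (0 : ℝ) < n)
  have hlo' : Real.exp (-c) * (n * q) ^ (n - k) ≤ 1 / 200 := by
    refine (hn.exp_neg_mul_pow_le hlo (Nat.sub_le n k)).trans' ?_
    gcongr
    exact mul_le_of_le_one_right n.cast_nonneg hq1
  have hup' : 1 / 200 < Real.exp (-c) * ((n ^ 2 : ℕ) * q) ^ (n - k) := by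
    refine (hn.lt_exp_neg_mul_pow hup hk hkn).trans_le ?_
    rw [div_eq_mul_one_div, Nat.cast_pow]
    gcongr
  obtain ⟨m, hnm, hm, hmle, hmge⟩ := exists_nat_mul_pow_mem (Real.exp_pos (-c)).le
    (by linarith) hn0 (Nat.sub_le n k) (Nat.le_self_pow two_ne_zero n) hlo' hup'
  exact ⟨m, hnm, hm, hmle, by linarith⟩

theorem IsLarge.exists_restrictionParameters (hn : IsLarge n) {c : ℝ}
    (hlo : 3 / 2 * n * Real.log n - n ≤ c) (hup : c ≤ 3 / 2 * n * Real.log n + 2 * n) :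
    ∃ k m x, RestrictionParameters n (Real.exp (-c)) k m x := by
  let k := n.sqrt / 4
  have hk4 : 4 * k ≤ n.sqrt := Nat.mul_div_le _ _
  have hkn : k ≤ n := (Nat.div_le_self _ _).trans (Nat.sqrt_le_self n)
  have hkS : (k : ℝ) ≤ √n :=
    (Nat.cast_le.mpr (Nat.div_le_self _ _)).trans Real.nat_sqrt_le_real_sqrt
  have hSk : √(n : ℝ) ≤ 4 * k + 4 := by
    have : ((n.sqrt + 1 : ℕ) : ℝ) ≤ (4 * k + 4 : ℕ) := Nat.cast_le.mpr (by omega)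
    push_cast at this
    exact Real.real_sqrt_le_nat_sqrt_succ.trans this
  obtain ⟨x, hx, hx1, hxn, hxr⟩ := hn.exists_bias hk4 Real.nat_sqrt_le_real_sqrt
  have hq : 1 / 2 ≤ 1 / (1 + x) := one_div_le_one_div_of_le (by linarith) (by linarith)
  have hq1 : 1 / (1 + x) ≤ 1 := (div_le_one (by linarith)).mpr (by linarith)
  have hκ := Real.exp_pos (-c)
  obtain ⟨m, hnm, hm, hmle, hmge⟩ := hn.exists_alphabet_card hlo hup hkS hkn hq hq1
  have hm0 : (0 : ℝ) < m := by linarith [hn.le_cast, Nat.cast_le (α := ℝ).mpr hnm]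
  have hNm : ((n - k : ℕ) : ℝ) ≤ m := Nat.cast_le.mpr ((Nat.sub_le n k).trans hnm)
  have hcol : Real.exp (-c) * m ^ k * (m * (x / (1 + x))) ^ (n - k) ≤ 1 / 200 :=
    calc _ = Real.exp (-c) * (m * (1 / (1 + x))) ^ (n - k) * (m ^ k * x ^ (n - k)) := by
          rw [show m * (x / (1 + x)) = m * (1 / (1 + x)) * x by ring, mul_pow _ x]
          ring
      _ ≤ 1 / 200 * (((n : ℝ) ^ 2) ^ k * x ^ (n - k)) := by
          gcongr
          exact mod_cast hm
      _ ≤ 1 / 200 := by linarith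
  refine ⟨k, m, x, hkn, hm, by linarith, hx1,
    mul_one_add_pow_le_one_div_eight hκ.le (by positivity) (by nlinarith) hmle, ?_,
    hn.two_mul_exp_le_gain hSk hkn hnm hm (by linarith) hxr⟩
  have hp : 1 / 3 ≤ x / (1 + x) := by
    rw [div_le_div_iff₀ (by norm_num) (by linarith)]
    linarith
  rw [← mul_assoc]
  exact mul_one_add_pow_le_one_div_eight (by positivity) (by positivity) (by nlinarith) hcol

end Large

/-! ## The Nisan–Wigderson polynomial -/

theorem log_mem_Icc_of_rpow {x y s : ℝ} (hx : 0 < x) (hlo : x ^ s ≤ y) (hhi : y ≤ 2 * x ^ s) :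
    Real.log y ∈ Set.Icc (s * Real.log x) (s * Real.log x + 1) := by
  have hpow := Real.rpow_pos_of_pos hx s
  rw [← Real.log_rpow hx]
  refine ⟨Real.log_le_log hpow hlo, ?_⟩
  have h := Real.log_le_log (hpow.trans_le hlo) hhi
  rw [Real.log_mul two_ne_zero hpow.ne'] at h
  linarith [Real.log_two_lt_d9]

section NisanWigderson

variable {μ : ℝ} {n ψ : ℕ}

theorem nwGamma_mul (hμ1 : μ < 1) : (2 + nwGamma μ) * (1 - μ) = 6 := by
  have hμ : 1 - μ ≠ 0 := by linarith
  have hden : 1 - (μ + (1 - μ) / 2) = (1 - μ) / 2 := by ring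
  rw [nwGamma, hden]
  field_simp
  ring

theorem four_le_nwGamma (hμ0 : 0 ≤ μ) (hμ1 : μ < 1) : 4 ≤ nwGamma μ := by
  nlinarith [nwGamma_mul hμ1]

/-- The conditions on the parameters `n` and `ψ` of `NWpoly` for `n` large; the logarithmic one
says that `ψ` has order of magnitude `n ^ (1 + γ)`. -/
structure IsNWPair (μ : ℝ) (n ψ : ℕ) : Prop where
  isLarge : IsLarge n
  nwGamma_le : 4 * (1 + nwGamma μ) ≤ √n
  log_mem : Real.log ψ ∈
    Set.Icc ((1 + nwGamma μ) * Real.log n) ((1 + nwGamma μ) * Real.log n + 1)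

theorem eventually_isNWPair (μ : ℝ) : ∀ᶠ n : ℕ in Filter.atTop, ∀ ψ : ℕ,
    (n : ℝ) ^ (1 + nwGamma μ) ≤ ψ → (ψ : ℝ) ≤ 2 * (n : ℝ) ^ (1 + nwGamma μ) → IsNWPair μ n ψ := by
  have hsqrt : ∀ᶠ n : ℕ in Filter.atTop, 4 * (1 + nwGamma μ) ≤ √(n : ℝ) :=
    (Real.tendsto_sqrt_atTop.comp tendsto_natCast_atTop_atTop).eventually_ge_atTop _
  filter_upwards [eventually_isLarge, hsqrt] with n hn hγ ψ hlo hhi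
  exact ⟨hn, hγ, log_mem_Icc_of_rpow (by linarith [hn.le_cast]) hlo hhi⟩

theorem IsNWPair.pos (h : IsNWPair μ n ψ) (hμ0 : 0 ≤ μ) (hμ1 : μ < 1) : (0 : ℝ) < ψ := by
  refine ψ.cast_nonneg.lt_of_ne fun h0 ↦ ?_
  have hL := h.log_mem.1
  rw [← h0, Real.log_zero] at hL
  nlinarith [four_le_nwGamma hμ0 hμ1, h.isLarge.le_log]

theorem IsNWPair.pow_le (h : IsNWPair μ n ψ) (hμ0 : 0 ≤ μ) (hμ1 : μ < 1) : n ^ 5 ≤ ψ := by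
  have hn : (0 : ℝ) < n := by linarith [h.isLarge.le_cast]
  have hL := h.isLarge.le_log
  have hγ := four_le_nwGamma hμ0 hμ1
  rw [← Nat.cast_le (α := ℝ), Nat.cast_pow,
    ← Real.log_le_log_iff (by positivity) (h.pos hμ0 hμ1), Real.log_pow]
  refine le_trans ?_ h.log_mem.1
  push_cast
  gcongr
  linarith

theorem IsNWPair.sub_nwDreal (h : IsNWPair μ n ψ) (hμ0 : 0 ≤ μ) (hμ1 : μ < 1) :
    n - nwDreal μ n (n * ψ) = n * (3 - (1 + μ) / 2 *
      ((Real.log ψ - (1 + nwGamma μ) * Real.log n) / Real.log n)) / (2 * (1 + nwGamma μ)) := by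
  have hγ : 1 + nwGamma μ ≠ 0 := by linarith [four_le_nwGamma hμ0 hμ1]
  have hL : Real.log n ≠ 0 := by linarith [h.isLarge.le_log]
  have hn : (n : ℝ) ≠ 0 := by linarith [h.isLarge.le_cast]
  rw [nwDreal, Nat.cast_mul, Real.log_mul hn (h.pos hμ0 hμ1).ne']
  field_simp
  linear_combination Real.log n * nwGamma_mul hμ1

theorem IsNWPair.sub_nwDreal_mem (h : IsNWPair μ n ψ) (hμ0 : 0 ≤ μ) (hμ1 : μ < 1) :
    n - nwDreal μ n (n * ψ) ∈ Set.Icc (n * (3 - 1 / Real.log n) / (2 * (1 + nwGamma μ)))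
      (n * 3 / (2 * (1 + nwGamma μ))) := by
  have hγ := four_le_nwGamma hμ0 hμ1
  have hL := h.isLarge.le_log
  obtain ⟨hlo, hhi⟩ := h.log_mem
  rw [h.sub_nwDreal hμ0 hμ1]
  set e := Real.log ψ - (1 + nwGamma μ) * Real.log n
  have he0 : 0 ≤ e / Real.log n := div_nonneg (by linarith) (by linarith)
  have he1 : e / Real.log n ≤ 1 / Real.log n := by
    gcongr
    linarith
  constructor <;> gcongr <;> nlinarith

theorem IsNWPair.floor_nwDreal_le (h : IsNWPair μ n ψ) (hμ0 : 0 ≤ μ) (hμ1 : μ < 1) :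
    ⌊nwDreal μ n (n * ψ)⌋₊ ≤ n := by
  refine Nat.floor_le_of_le (sub_nonneg.mp ((h.sub_nwDreal_mem hμ0 hμ1).1.trans' ?_))
  have hL := h.isLarge.le_log
  have hγ := four_le_nwGamma hμ0 hμ1
  have hL1 : 1 / Real.log n ≤ 1 := (div_le_one (by linarith)).mpr (by linarith)
  have : 0 ≤ 3 - 1 / Real.log n := by linarith
  positivity

theorem IsNWPair.seven_tenths_mul_le_nwDreal (h : IsNWPair μ n ψ) (hμ0 : 0 ≤ μ) (hμ1 : μ < 1) :
    7 / 10 * (n : ℝ) ≤ nwDreal μ n (n * ψ) := by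
  have hγ := four_le_nwGamma hμ0 hμ1
  have : n * 3 / (2 * (1 + nwGamma μ)) ≤ n * 3 / (2 * (1 + 4)) := by gcongr
  linarith [(h.sub_nwDreal_mem hμ0 hμ1).2]

theorem IsNWPair.sqrt_le_floor_nwDreal (h : IsNWPair μ n ψ) (hμ0 : 0 ≤ μ) (hμ1 : μ < 1) :
    n.sqrt ≤ ⌊nwDreal μ n (n * ψ)⌋₊ := by
  have hS := h.isLarge.le_sqrt
  have hSS : √(n : ℝ) * √n = n := Real.mul_self_sqrt n.cast_nonneg
  refine Nat.le_floor (Real.nat_sqrt_le_real_sqrt.trans ?_)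
  nlinarith [h.seven_tenths_mul_le_nwDreal hμ0 hμ1]

theorem IsNWPair.le_sub_floor_mul_log (h : IsNWPair μ n ψ) (hμ0 : 0 ≤ μ) (hμ1 : μ < 1) :
    3 / 2 * n * Real.log n - n ≤ (n - ⌊nwDreal μ n (n * ψ)⌋₊) * Real.log ψ := by
  have hγ := four_le_nwGamma hμ0 hμ1
  have hL := h.isLarge.le_log
  have hD := Nat.floor_le (by linarith [h.seven_tenths_mul_le_nwDreal hμ0 hμ1, h.isLarge.le_cast] :
    0 ≤ nwDreal μ n (n * ψ))
  have hDn : (0 : ℝ) ≤ n - ⌊nwDreal μ n (n * ψ)⌋₊ :=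
    sub_nonneg.mpr (Nat.cast_le.mpr (h.floor_nwDreal_le hμ0 hμ1))
  calc 3 / 2 * n * Real.log n - n ≤ 3 / 2 * n * Real.log n - n / 2 := by
        linarith [(n.cast_nonneg : (0 : ℝ) ≤ n)]
    _ = n * (3 - 1 / Real.log n) / (2 * (1 + nwGamma μ)) *
          ((1 + nwGamma μ) * Real.log n) := by
        field_simp
    _ ≤ (n - ⌊nwDreal μ n (n * ψ)⌋₊) * ((1 + nwGamma μ) * Real.log n) := by
        gcongr
        linarith [(h.sub_nwDreal_mem hμ0 hμ1).1]
    _ ≤ _ := mul_le_mul_of_nonneg_left h.log_mem.1 hDn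

theorem IsNWPair.sub_floor_mul_log_le (h : IsNWPair μ n ψ) (hμ0 : 0 ≤ μ) (hμ1 : μ < 1) :
    (n - ⌊nwDreal μ n (n * ψ)⌋₊) * Real.log ψ ≤ 3 / 2 * n * Real.log n + 2 * n := by
  have hγ := four_le_nwGamma hμ0 hμ1
  have hL := h.isLarge.le_log
  have hSS : √(n : ℝ) * √n = n := Real.mul_self_sqrt n.cast_nonneg
  have hDn : (0 : ℝ) ≤ n - ⌊nwDreal μ n (n * ψ)⌋₊ :=
    sub_nonneg.mpr (Nat.cast_le.mpr (h.floor_nwDreal_le hμ0 hμ1))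
  have hfrac : n * 3 / (2 * (1 + nwGamma μ)) ≤ n * 3 / (2 * (1 + 4)) := by gcongr
  have hγL : (1 + nwGamma μ) * Real.log n ≤ √n / 4 * (√n / 2) := by
    have := h.isLarge.log_le
    gcongr
    linarith [h.nwGamma_le]
  calc (n - ⌊nwDreal μ n (n * ψ)⌋₊) * Real.log ψ
      ≤ (n - ⌊nwDreal μ n (n * ψ)⌋₊) * ((1 + nwGamma μ) * Real.log n + 1) :=
        mul_le_mul_of_nonneg_left h.log_mem.2 hDn
    _ ≤ (n * 3 / (2 * (1 + nwGamma μ)) + 1) * ((1 + nwGamma μ) * Real.log n + 1) := by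
        gcongr
        linarith [Nat.lt_floor_add_one (nwDreal μ n (n * ψ)), (h.sub_nwDreal_mem hμ0 hμ1).2]
    _ = 3 / 2 * n * Real.log n + n * 3 / (2 * (1 + nwGamma μ)) +
          ((1 + nwGamma μ) * Real.log n + 1) := by
        field_simp
    _ ≤ _ := by linarith [h.isLarge.le_cast]

theorem codeDensity_reedSolomon {q n D : ℕ} [NeZero q] :
    codeDensity (Fin D → ZMod q) (Fin n) (ZMod q) = Real.exp (-((n - D) * Real.log q)) := by
  have hq : (0 : ℝ) < q := Nat.cast_pos.mpr (NeZero.pos q)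
  have hexp : Real.exp (-((n - D) * Real.log q)) =
      Real.exp (D * Real.log q) * Real.exp (n * -Real.log q) := by
    rw [← Real.exp_add]
    ring_nf
  rw [hexp, Real.exp_nat_mul, Real.exp_nat_mul, Real.exp_neg, Real.exp_log hq, codeDensity,
    Fintype.card_fun, ZMod.card, Fintype.card_fin, Fintype.card_fin, Nat.cast_pow]

theorem one_add_mul_inv_pow_sub_one_le {n m q : ℕ} (hn : 6 ≤ n) (hm : m ≤ n ^ 2)
    (hq : n ^ 5 ≤ q) : (1 + (m : ℝ) * (q : ℝ)⁻¹) ^ n - 1 ≤ 1 / 16 := by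
  have hn' : (6 : ℝ) ≤ n := mod_cast hn
  have ht : (n : ℝ) * (m * (q : ℝ)⁻¹) ≤ 1 / 36 :=
    calc (n : ℝ) * (m * (q : ℝ)⁻¹) ≤ n * (n ^ 2 * ((n : ℝ) ^ 5)⁻¹) := by
          gcongr
          · exact mod_cast hm
          · exact mod_cast hq
      _ = 1 / (n : ℝ) ^ 2 := by field_simp
      _ ≤ 1 / 6 ^ 2 := by gcongr
      _ = 1 / 36 := by norm_num
  have hexp : Real.exp (1 / 36) ≤ 17 / 16 :=
    (Real.exp_bound_div_one_sub_of_interval (by norm_num) (by norm_num)).trans (by norm_num)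
  have hpow : (1 + (m : ℝ) * (q : ℝ)⁻¹) ^ n ≤ Real.exp (n * (m * (q : ℝ)⁻¹)) := by
    rw [Real.exp_nat_mul, add_comm]
    gcongr
    exact Real.add_one_le_exp _
  linarith [Real.exp_le_exp.mpr ht]

theorem IsNWPair.mul_rpow_div_le (h : IsNWPair μ n ψ) (hμ0 : 0 ≤ μ) (hμ1 : μ < 1) {m : ℕ}
    (hm : m ≤ n ^ 2) :
    m * ((n * ψ : ℕ) : ℝ) ^ μ / ψ ≤ Real.exp (-(2 * Real.log n)) := by
  have hL := h.isLarge.le_log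
  have hn0 : (0 : ℝ) < n := by linarith [h.isLarge.le_cast]
  have hψ0 := h.pos hμ0 hμ1
  have hm' : (m : ℝ) ≤ Real.exp ((2 : ℕ) * Real.log n) := by
    rw [h.isLarge.exp_nat_mul_log]
    exact mod_cast hm
  have hpow : ((n * ψ : ℕ) : ℝ) ^ μ = Real.exp ((Real.log n + Real.log ψ) * μ) := by
    rw [Nat.cast_mul, Real.rpow_def_of_pos (by positivity), Real.log_mul hn0.ne' hψ0.ne']
  calc m * ((n * ψ : ℕ) : ℝ) ^ μ / ψ
      ≤ Real.exp ((2 : ℕ) * Real.log n) * Real.exp ((Real.log n + Real.log ψ) * μ) /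
          Real.exp (Real.log ψ) := by
        rw [hpow, Real.exp_log hψ0]
        gcongr
    _ ≤ _ := by
        rw [← Real.exp_add, ← Real.exp_sub, Real.exp_le_exp]
        push_cast
        nlinarith [nwGamma_mul hμ1, h.log_mem.1]

theorem IsNWPair.mul_pow_sqrt_le (h : IsNWPair μ n ψ) (hμ0 : 0 ≤ μ) (hμ1 : μ < 1) {m : ℕ}
    (hm : m ≤ n ^ 2) {Y : ℝ} (hY : Y ≤ Real.exp (Real.log n * √n / 48)) :
    Y * (m * ((n * ψ : ℕ) : ℝ) ^ μ / ψ) ^ n.sqrt ≤ 1 / 8 := by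
  have hL := h.isLarge.le_log
  have hS := h.isLarge.le_sqrt
  have hexponent : 8 ≤ n.sqrt * (2 * Real.log n) - Real.log n * √n / 48 := by
    have : √n ≤ n.sqrt + 1 := Real.real_sqrt_le_nat_sqrt_succ
    nlinarith
  calc Y * (m * ((n * ψ : ℕ) : ℝ) ^ μ / ψ) ^ n.sqrt
      ≤ Real.exp (Real.log n * √n / 48) * Real.exp (-(2 * Real.log n)) ^ n.sqrt := by
        gcongr
        exact h.mul_rpow_div_le hμ0 hμ1 hm
    _ = Real.exp (-(n.sqrt * (2 * Real.log n) - Real.log n * √n / 48)) := by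
        rw [← Real.exp_nat_mul, ← Real.exp_add]
        ring_nf
    _ ≤ 1 / 8 := exp_neg_le_one_div (by norm_num) hexponent

end NisanWigderson

section Main

open Finset

variable {F : Type*} [Field F] {μ : ℝ} {n ψ T d : ℕ} [Fact ψ.Prime]

theorem IsNWPair.exp_le_mul_of_translate_eq_of_pos (h : IsNWPair μ n ψ) (hμ0 : 0 ≤ μ) (hμ1 : μ < 1)
    (hd : 0 < d) (a : Fin n × ZMod ψ → F) (Q : Fin T → Fin d → MvPolynomial (Fin n × ZMod ψ) F)
    (hs : ∀ i j, (#(Q i j).vars : ℝ) ≤ ((n * ψ : ℕ) : ℝ) ^ μ)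
    (hQ : aeval (fun v ↦ X v + C (a v)) (NWpoly F μ n ψ) = ∑ i, ∏ j, Q i j) :
    Real.exp (Real.log n * √n / 48) ≤ (T * d : ℕ) := by
  by_contra! hlt
  set D := ⌊nwDreal μ n (n * ψ)⌋₊ with hD
  have hnψ : n ^ 5 ≤ ψ := h.pow_le hμ0 hμ1
  have hMDS : IsMDS (reedSolomon ψ n D) D :=
    isMDS_reedSolomon (h.floor_nwDreal_le hμ0 hμ1) ((Nat.le_self_pow (by norm_num) n).trans hnψ)
  obtain ⟨k, m, x, hp⟩ := h.isLarge.exists_restrictionParameters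
    (h.le_sub_floor_mul_log hμ0 hμ1) (h.sub_floor_mul_log_le hμ0 hμ1)
  rw [← hD, ← codeDensity_reedSolomon] at hp
  obtain ⟨K, -, hK⟩ := exists_subset_card_eq (s := (univ : Finset (Fin n))) (n := k)
    (by simpa using hp.le_length)
  have hKc : #Kᶜ = n - k := by rw [card_compl, hK, Fintype.card_fin]
  have hn6 : 6 ≤ n := by
    have : (6 : ℝ) ≤ n := by linarith [h.isLarge.le_cast]
    exact mod_cast this
  have hcount := codeDensity_mul_le_of_translate_eq (Fin m) hMDS
    (h.sqrt_le_floor_nwDreal hμ0 hμ1) K a hs hQ hp.pos hp.le_one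
    (by simpa [hKc] using hp.row_le) (by simpa [hK, hKc] using hp.col_le)
    (by simpa using one_add_mul_inv_pow_sub_one_le hn6 hp.le_sq hnψ)
    (by simpa using h.mul_pow_sqrt_le hμ0 hμ1 hp.le_sq hlt.le)
  rw [hK, hKc, Fintype.card_fin, Fintype.card_fin] at hcount
  have hT : (T : ℝ) ≤ (T * d : ℕ) := Nat.cast_le.mpr (Nat.le_mul_of_pos_right T hd)
  have hlt' := mul_lt_mul_of_pos_left (hT.trans_lt hlt) (by positivity : (0 : ℝ) < 2 * (n * m + 1))
  linarith [hp.gain]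

theorem IsNWPair.exp_le_mul_of_translate_eq (h : IsNWPair μ n ψ) (hμ0 : 0 ≤ μ) (hμ1 : μ < 1)
    (a : Fin n × ZMod ψ → F) (Q : Fin T → Fin d → MvPolynomial (Fin n × ZMod ψ) F)
    (hs : ∀ i j, (#(Q i j).vars : ℝ) ≤ ((n * ψ : ℕ) : ℝ) ^ μ)
    (hQ : aeval (fun v ↦ X v + C (a v)) (NWpoly F μ n ψ) = ∑ i, ∏ j, Q i j) :
    Real.exp (Real.log n * √n / 48) ≤ (T * d : ℕ) := by
  rcases d.eq_zero_or_pos with rfl | hd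
  · -- A sum of `T` empty products is a constant, that is, a single factor without variables.
    have hle := h.exp_le_mul_of_translate_eq_of_pos (T := 1) hμ0 hμ1 one_pos a
      (fun _ _ ↦ C (T : F)) (fun _ _ ↦ by rw [vars_C, card_empty, Nat.cast_zero]; positivity)
      (by rw [hQ]; simp)
    have hpos : 0 < Real.log n * √n / 48 := by
      have := h.isLarge.le_log
      have := h.isLarge.le_sqrt
      positivity
    exact absurd hle (by simpa using hpos)
  · exact h.exp_le_mul_of_translate_eq_of_pos hμ0 hμ1 hd a Q hs hQ

end Main

theorem stmt13_general (μ : ℝ) (hμ0 : 0 ≤ μ) (hμ1 : μ < 1) :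
    ∃ n₀ : ℕ, ∀ n : ℕ, n₀ ≤ n → ∀ (ψ : ℕ) [Fact ψ.Prime],
      (n : ℝ) ^ (1 + nwGamma μ) ≤ ψ → (ψ : ℝ) ≤ 2 * (n : ℝ) ^ (1 + nwGamma μ) →
      ∀ (F : Type*) [Field F] (a : Fin n × ZMod ψ → F) (T d : ℕ)
        (Q : Fin T → Fin d → MvPolynomial (Fin n × ZMod ψ) F),
        (∀ i j, ((Q i j).vars.card : ℝ) ≤ ((n * ψ : ℕ) : ℝ) ^ μ) →
        aeval (fun v ↦ X v + C (a v)) (NWpoly F μ n ψ) = ∑ i, ∏ j, Q i j →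
        (n : ℝ) ^ (1 / 48 * √n) ≤ (T * d : ℕ) := by
  obtain ⟨n₀, hn₀⟩ := Filter.eventually_atTop.mp (eventually_isNWPair μ)
  refine ⟨n₀, fun n hn ψ _ hlo hhi F _ a T d Q hs hQ ↦ ?_⟩
  have h : IsNWPair μ n ψ := hn₀ n hn ψ hlo hhi
  calc (n : ℝ) ^ (1 / 48 * √n) = Real.exp (Real.log n * √n / 48) := by
        rw [Real.rpow_def_of_pos (by linarith [h.isLarge.le_cast])]
        ring_nf
    _ ≤ _ := h.exp_le_mul_of_translate_eq hμ0 hμ1 a Q hs hQ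

/-- Over a field of characteristic zero, for every `0 ≤ μ < 1` there are
constants `c > 0` and `n₀` (depending only on `μ`) such that for every `n ≥ n₀` and every
point `a ∈ F^N`: any representation of the translated polynomial `NW_{n,μ}(X̄ + ā)` as
`∑_{i=1}^T ∏_{j=1}^d Q_{ij}` with each `Q_{ij}` depending on at most `N^μ` variables
satisfies `T·d ≥ n^{c·√n}`. -/
theorem stmt13 (F : Type*) [Field F] [CharZero F] (μ : ℝ) (hμ0 : 0 ≤ μ) (hμ1 : μ < 1) :
    ∃ c : ℝ, 0 < c ∧ ∃ n₀ : ℕ, ∀ n : ℕ, n₀ ≤ n →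
      ∀ (ψ : ℕ) [NeZero ψ], ψ.Prime →
        (n : ℝ) ^ (1 + nwGamma μ) ≤ (ψ : ℝ) →
        (ψ : ℝ) ≤ 2 * (n : ℝ) ^ (1 + nwGamma μ) →
        (∀ ψ' : ℕ, ψ'.Prime → (n : ℝ) ^ (1 + nwGamma μ) ≤ (ψ' : ℝ) →
          (ψ' : ℝ) ≤ 2 * (n : ℝ) ^ (1 + nwGamma μ) → ψ ≤ ψ') →
        ∀ (a : Fin n × ZMod ψ → F)
          (T d : ℕ) (Q : Fin T → Fin d → MvPolynomial (Fin n × ZMod ψ) F),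
          (∀ i j, ((Q i j).vars.card : ℝ) ≤ ((n * ψ : ℕ) : ℝ) ^ μ) →
          aeval (fun v => X v + C (a v)) (NWpoly F μ n ψ) = ∑ i, ∏ j, Q i j →
          (n : ℝ) ^ (c * Real.sqrt n) ≤ ((T * d : ℕ) : ℝ) := by
  obtain ⟨n₀, hn₀⟩ := stmt13_general μ hμ0 hμ1
  exact ⟨1 / 48, by norm_num, n₀, fun n hn ψ _ hψ hlo hhi _ ↦
    have : Fact ψ.Prime := ⟨hψ⟩
    hn₀ n hn ψ hlo hhi F⟩
end

section
/- Let F be a field of characteristic zero. Let P' be a nonzero polynomial in the variables {Y_j : j ∈ S} ∪ {X} (for a finite index set S) whose degree in X is at most k, and suppose P' = ∑_{r=1}^{T} ∏_{j=1}^{d} Q'_{rj} where each Q'_{rj} depends on at most v variables. Let g ∈ F[{Y_j : j ∈ S}] be homogeneous of degree a' ≥ 1, and suppose X − g divides P'. Then g can be written as g = ∑_{r=1}^{I'} ∏_{j=1}^{d'} Γ_{rj} where I' ≤ (d·a'² + 1) · binom(k + a' + 1, k + 1) · binom(T·(k+1)³ + a', a')^{k+1}, d' ≤ d·a', and each Γ_{rj}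 depends on at most v variables. -/
open MvPolynomial

/-!
View `P'` as a univariate polynomial in `X` over `F[Y]` and replace it by an iterated derivative `q`
of which `g` is a simple root. By interpolation in `X`, the coefficients of `q` lie in the span `L`
of `1` and the summands of `k + 1` specialisations of `P'`. At a point `c` with `q'(g)(c) ≠ 0`,
Newton iteration started at the constant `g(c)` approximates `g` to any order by a polynomial
expression in elements of `L` vanishing at `c`. Since a product of more than `a'` such elements is
negligible to order `a'`, `g` is approximated by an element of `L ^ a'`, a combination of products
of `a'` generators. After translating `c` to the origin, `g` is exactly the part of degree at most
`a'` of this approximation, and taking that part of a product is interpolation along dilations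
`Y ↦ t Y`, which preserve the set of variables of every factor.
-/

section Interpolation

theorem exists_sum_mul_pow_eq {F : Type*} [Field F] {n : ℕ} {x : Fin n → F}
    (hx : Function.Injective x) (φ : ℕ → F) :
    ∃ w : Fin n → F, ∀ m < n, ∑ i, w i * x i ^ m = φ m := by
  have hunit : IsUnit (Matrix.vandermonde x) :=
    (Matrix.isUnit_iff_isUnit_det _).mpr (Matrix.det_vandermonde_ne_zero_iff.mpr hx).isUnit
  obtain ⟨w, hw⟩ := Matrix.vecMul_surjective_iff_isUnit.mpr hunit fun m => φ m
  exact ⟨w, fun m hm => congrFun hw ⟨m, hm⟩⟩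

theorem natCast_fin_injective (F : Type*) [AddMonoidWithOne F] [CharZero F] (n : ℕ) :
    Function.Injective fun i : Fin n => ((i : ℕ) : F) :=
  Nat.cast_injective.comp Fin.val_injective

theorem coeff_mem_span_range_eval {F R : Type*} [Field F] [CommRing R] [Algebra F R]
    {p : Polynomial R} {n : ℕ} (hp : p.natDegree < n) {x : Fin n → F}
    (hx : Function.Injective x) (e : ℕ) :
    p.coeff e ∈ Submodule.span F (Set.range fun i => p.eval (algebraMap F R (x i))) := by
  obtain he | he := le_or_gt n e
  · rw [Polynomial.coeff_eq_zero_of_natDegree_lt (hp.trans_le he)]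
    exact zero_mem _
  obtain ⟨w, hw⟩ := exists_sum_mul_pow_eq hx (Pi.single e 1)
  refine (Submodule.mem_span_range_iff_exists_fun F).mpr ⟨w, ?_⟩
  calc ∑ i, w i • p.eval (algebraMap F R (x i))
      = ∑ m ∈ Finset.range n, (∑ i, w i * x i ^ m) • p.coeff m := by
        simp only [Polynomial.eval_eq_sum_range' hp, Finset.smul_sum, Finset.sum_smul]
        rw [Finset.sum_comm]
        refine Finset.sum_congr rfl fun m _ => Finset.sum_congr rfl fun i _ => ?_
        simp only [Algebra.smul_def, map_mul, map_pow]
        ring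
    _ = ∑ m ∈ Finset.range n, (Pi.single e 1 : ℕ → F) m • p.coeff m :=
        Finset.sum_congr rfl fun m hm => by rw [hw m (Finset.mem_range.mp hm)]
    _ = p.coeff e := by simp [Pi.single_apply, he]

end Interpolation

section Newton

theorem exists_iterate_derivative_simple_root {R : Type*} [CommRing R] [IsDomain R] [CharZero R]
    {p : Polynomial R} (hp : p ≠ 0) {g : R} (hg : p.IsRoot g) :
    ∃ n, (Polynomial.derivative^[n] p).IsRoot g ∧
      ¬ (Polynomial.derivative^[n + 1] p).IsRoot g := by
  have hlt := fun n =>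
    Polynomial.lt_rootMultiplicity_iff_isRoot_iterate_derivative (t := g) (n := n) hp
  obtain ⟨n, hn⟩ :=
    Nat.exists_eq_add_one.mpr ((Polynomial.rootMultiplicity_pos hp).mpr hg)
  have hroots : ∀ m ≤ n, (Polynomial.derivative^[m] p).IsRoot g := (hlt n).mp (by omega)
  refine ⟨n, hroots n le_rfl, fun hroot => ?_⟩
  have : n + 1 < p.rootMultiplicity g := (hlt (n + 1)).mpr fun m hm =>
    (Nat.le_succ_iff.mp hm).elim (hroots m) (by rintro rfl; exact hroot)
  omega

theorem eval_mem_of_coeff_mem {R : Type*} [CommRing R] {A : Subring R} {q : Polynomial R}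
    (hq : ∀ i, q.coeff i ∈ A) {x : R} (hx : x ∈ A) : q.eval x ∈ A := by
  rw [Polynomial.eval_eq_sum_range]
  exact sum_mem fun i _ => mul_mem (hq i) (pow_mem hx i)

/- Newton iteration `U ↦ U - u * q(U)`, where the fixed approximate inverse `u` of `q'(g)` gains
one power of `I` per step. -/
theorem exists_mem_sub_mem_pow_of_isRoot {R : Type*} [CommRing R] {A : Subring R} {I : Ideal R}
    {q : Polynomial R} (hq : ∀ i, q.coeff i ∈ A) {g u U₀ : R} (hg : q.IsRoot g)
    (hu : u ∈ A) (huI : 1 - u * q.derivative.eval g ∈ I) (hU₀ : U₀ ∈ A) (hU₀I : g - U₀ ∈ I)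
    (n : ℕ) : ∃ U ∈ A, g - U ∈ I ^ (n + 1) := by
  induction n with
  | zero => exact ⟨U₀, hU₀, by simpa using hU₀I⟩
  | succ n ih =>
    obtain ⟨U, hU, hUI⟩ := ih
    refine ⟨U - u * q.eval U, sub_mem hU (mul_mem hu (eval_mem_of_coeff_mem hq hU)), ?_⟩
    obtain ⟨z, hz⟩ := q.binomExpansion g (U - g)
    rw [add_sub_cancel, hg.eq_zero, zero_add] at hz
    have hfactor : g - (U - u * q.eval U) =
        (g - U) * ((1 - u * q.derivative.eval g) + u * z * (g - U)) := by
      rw [hz]; ring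
    rw [hfactor, pow_succ]
    exact Ideal.mul_mem_mul hUI
      (add_mem huI (Ideal.mul_mem_left _ _ (Ideal.pow_le_self n.succ_ne_zero hUI)))

variable {F R : Type*} [Field F] [CommRing R] [Algebra F R]

theorem toSubmodule_adjoin_inter_le (L : Submodule F R) (hL : 1 ≤ L) (I : Ideal R) (n : ℕ) :
    Subalgebra.toSubmodule (Algebra.adjoin F ((L : Set R) ∩ I)) ≤
      L ^ n ⊔ (I ^ (n + 1)).restrictScalars F := by
  rw [Algebra.adjoin_eq_span, Submodule.span_le]
  intro x hx
  obtain ⟨m, hxL, hxI⟩ : ∃ m, x ∈ L ^ m ∧ x ∈ I ^ m := by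
    induction hx using Submonoid.closure_induction with
    | mem x hx => exact ⟨1, by simpa using hx.1, by simpa using hx.2⟩
    | one => exact ⟨0, by simp [Submodule.one_le.mp le_rfl], by simp⟩
    | mul x y _ _ ihx ihy =>
      obtain ⟨i, hxL, hxI⟩ := ihx
      obtain ⟨j, hyL, hyI⟩ := ihy
      exact ⟨i + j, pow_add L i j ▸ Submodule.mul_mem_mul hxL hyL,
        pow_add I i j ▸ Ideal.mul_mem_mul hxI hyI⟩
  obtain hm | hm := le_or_gt m n
  · exact Submodule.mem_sup_left (pow_le_pow_right' hL hm hxL)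
  · exact Submodule.mem_sup_right (Ideal.pow_le_pow_right hm hxI)

theorem exists_mem_pow_sub_mem_ker_pow_of_isRoot (ε : R →ₐ[F] F) {L : Submodule F R}
    (hL : 1 ≤ L) {q : Polynomial R} (hq : ∀ i, q.coeff i ∈ L) {g : R} (hg : q.IsRoot g)
    (hg' : ε (q.derivative.eval g) ≠ 0) (n : ℕ) :
    ∃ W ∈ L ^ n, g - W ∈ RingHom.ker ε ^ (n + 1) := by
  set I := RingHom.ker ε
  set A := Algebra.adjoin F ((L : Set R) ∩ I)
  have hLA : ∀ x ∈ L, x ∈ A := fun x hx => by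
    have hx₀ : x - algebraMap F R (ε x) ∈ A := Algebra.subset_adjoin
      ⟨sub_mem hx (hL (Submodule.algebraMap_mem _)), by simp [I]⟩
    exact sub_add_cancel x (algebraMap F R (ε x)) ▸ add_mem hx₀ (A.algebraMap_mem _)
  obtain ⟨U, hUA, hUI⟩ := exists_mem_sub_mem_pow_of_isRoot (A := A.toSubring) (I := I)
    (u := algebraMap F R (ε (q.derivative.eval g))⁻¹) (U₀ := algebraMap F R (ε g))
    (fun i => hLA _ (hq i)) hg (A.algebraMap_mem _) (by simp [I, hg']) (A.algebraMap_mem _)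
    (by simp [I]) n
  obtain ⟨W, hW, V, hV, rfl⟩ :=
    Submodule.mem_sup.mp (toSubmodule_adjoin_inter_le L hL I n hUA)
  exact ⟨W, hW, by convert add_mem hUI hV using 1; ring⟩

end Newton

theorem span_range_pow_le_span_sym {F R κ : Type*} [CommSemiring F] [CommSemiring R] [Algebra F R]
    (M : κ → R) (n : ℕ) :
    Submodule.span F (Set.range M) ^ n ≤
      Submodule.span F (Set.range fun s : Sym κ n => ((s : Multiset κ).map M).prod) := by
  induction n with
  | zero =>
    rw [pow_zero, Submodule.one_eq_span]
    exact Submodule.span_mono (by rintro _ rfl; exact ⟨Sym.nil, by simp⟩)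
  | succ n ih =>
    rw [pow_succ']
    refine (mul_le_mul_right ih _).trans ?_
    rw [Submodule.span_mul_span]
    refine Submodule.span_mono ?_
    rintro _ ⟨_, ⟨i, rfl⟩, _, ⟨s, rfl⟩, rfl⟩
    exact ⟨i ::ₛ s, by change ((i ::ₘ (s : Multiset κ)).map M).prod = _; simp⟩

section Truncation

variable {σ R : Type*}

/-- The part of total degree at most `n` of a polynomial. -/
noncomputable def truncateLE [CommSemiring R] (n : ℕ) :
    MvPolynomial σ R →ₗ[R] MvPolynomial σ R :=
  ∑ i ∈ Finset.range (n + 1), homogeneousComponent i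

section CommSemiring

variable [CommSemiring R] (n : ℕ) (f : MvPolynomial σ R)

theorem coeff_truncateLE (m : σ →₀ ℕ) :
    coeff m (truncateLE n f) = if m.degree ≤ n then coeff m f else 0 := by
  simp [truncateLE, coeff_sum, coeff_homogeneousComponent]

theorem totalDegree_truncateLE_le : (truncateLE n f).totalDegree ≤ n := by
  rw [truncateLE, LinearMap.sum_apply]
  exact totalDegree_finsetSum_le fun i hi =>
    (homogeneousComponent_isHomogeneous i f).totalDegree_le.trans
      (Nat.lt_succ_iff.mp (Finset.mem_range.mp hi))

theorem vars_truncateLE_subset : (truncateLE n f).vars ⊆ f.vars := by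
  intro i hi
  simp only [mem_vars_iff_mem_support, mem_support_iff, coeff_truncateLE] at hi ⊢
  obtain ⟨m, hm, him⟩ := hi
  exact ⟨m, (ite_ne_right_iff.mp hm).2, him⟩

variable {n f} in
theorem truncateLE_eq_self (hf : f.totalDegree ≤ n) : truncateLE n f = f := by
  ext m
  rw [coeff_truncateLE, ite_eq_left_iff]
  exact fun hm => (coeff_eq_zero_of_totalDegree_lt (by
    rw [← Finsupp.degree_apply]; omega)).symm

theorem coeff_aeval_C_mul_X (t : R) (m : σ →₀ ℕ) :
    coeff m (aeval (fun i => C t * X i) f) = t ^ m.degree * coeff m f := by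
  classical
  induction f using MvPolynomial.induction_on' with
  | add f g hf hg => rw [map_add, coeff_add, hf, hg, coeff_add, mul_add]
  | monomial u a =>
    have haeval : aeval (fun i => C t * X i) (monomial u a) = monomial u (t ^ u.degree * a) := by
      rw [aeval_monomial, monomial_eq, Finsupp.degree_apply]
      simp only [mul_pow, Finsupp.prod, Finset.prod_mul_distrib, algebraMap_eq,
        Finset.prod_pow_eq_pow_sum, map_pow, map_mul]
      ring
    rw [haeval, coeff_monomial, coeff_monomial]
    split_ifs with h <;> simp [h]

theorem totalDegree_aeval_le {τ : Type*} {f : σ → MvPolynomial τ R}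
    (hf : ∀ i, (f i).totalDegree ≤ 1) (p : MvPolynomial σ R) :
    (aeval f p).totalDegree ≤ p.totalDegree := by
  rw [aeval_def, eval₂_eq]
  refine totalDegree_finsetSum_le fun m hm => ?_
  calc (algebraMap R (MvPolynomial τ R) (coeff m p) * ∏ i ∈ m.support, f i ^ m i).totalDegree
      ≤ (C (coeff m p) : MvPolynomial τ R).totalDegree
          + (∏ i ∈ m.support, f i ^ m i).totalDegree := totalDegree_mul _ _
    _ ≤ ∑ i ∈ m.support, (f i ^ m i).totalDegree := by
        rw [totalDegree_C, zero_add]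
        exact totalDegree_finsetProd _ _
    _ ≤ ∑ i ∈ m.support, m i := Finset.sum_le_sum fun i _ =>
        (totalDegree_pow _ _).trans (mul_le_of_le_one_right' (hf i))
    _ ≤ p.totalDegree := le_totalDegree hm

end CommSemiring

section CommRing

variable [CommRing R] {n : ℕ}

theorem sub_truncateLE_mem (n : ℕ) (f : MvPolynomial σ R) :
    f - truncateLE n f ∈ idealOfVars σ R ^ (n + 1) := by
  rw [mem_pow_idealOfVars_iff']
  intro m hm
  simp [coeff_truncateLE, Nat.lt_succ_iff.mp hm]

theorem truncateLE_eq_of_sub_mem {f g : MvPolynomial σ R}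
    (h : f - g ∈ idealOfVars σ R ^ (n + 1)) : truncateLE n f = truncateLE n g := by
  rw [mem_pow_idealOfVars_iff'] at h
  ext m
  rw [coeff_truncateLE, coeff_truncateLE]
  split_ifs with hm
  · exact sub_eq_zero.mp (coeff_sub σ m f g ▸ h m (Nat.lt_succ_iff.mpr hm))
  · rfl

theorem truncateLE_prod_truncateLE {ι : Type*} (s : Finset ι) (f : ι → MvPolynomial σ R) :
    truncateLE n (∏ i ∈ s, truncateLE n (f i)) = truncateLE n (∏ i ∈ s, f i) := by
  refine truncateLE_eq_of_sub_mem (Ideal.Quotient.eq.mp ?_)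
  simp only [map_prod]
  exact Finset.prod_congr rfl fun i _ => (Ideal.Quotient.eq.mpr (sub_truncateLE_mem n (f i))).symm

end CommRing

theorem truncateLE_mem_span_range_aeval {F : Type*} [Field F] (n : ℕ) {N : ℕ}
    {f : MvPolynomial σ F} (hf : f.totalDegree < N) {x : Fin N → F} (hx : Function.Injective x) :
    truncateLE n f ∈
      Submodule.span F (Set.range fun i => aeval (fun s => C (x i) * X s) f) := by
  obtain ⟨w, hw⟩ := exists_sum_mul_pow_eq hx fun m => if m ≤ n then 1 else 0
  refine (Submodule.mem_span_range_iff_exists_fun F).mpr ⟨w, ?_⟩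
  ext m
  simp only [coeff_sum, coeff_smul, coeff_aeval_C_mul_X, smul_eq_mul, ← mul_assoc,
    ← Finset.sum_mul, coeff_truncateLE]
  obtain hm | hm := lt_or_ge m.degree N
  · rw [hw _ hm, ite_mul, one_mul, zero_mul]
  · rw [coeff_eq_zero_of_totalDegree_lt (f := f) (hf.trans_le hm), mul_zero, ite_self]

end Truncation

section Translation

variable {σ R : Type*}

/-- The substitution `X i ↦ X i + c i`, which moves the point `c` to the origin. -/
noncomputable def translateVars [CommSemiring R] (c : σ → R) :
    MvPolynomial σ R →ₐ[R] MvPolynomial σ R :=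
  aeval fun i => X i + C (c i)

theorem totalDegree_translateVars_le [CommSemiring R] (c : σ → R) (f : MvPolynomial σ R) :
    (translateVars c f).totalDegree ≤ f.totalDegree :=
  totalDegree_aeval_le (fun i => (totalDegree_add _ _).trans (by
    rw [totalDegree_C]
    exact max_le (isHomogeneous_X R i).totalDegree_le zero_le_one)) f

variable [CommRing R] (c : σ → R)

theorem translateVars_neg_translateVars (f : MvPolynomial σ R) :
    translateVars (-c) (translateVars c f) = f := by
  have h : (translateVars (-c)).comp (translateVars c) = AlgHom.id R _ := by
    ext i : 1
    simp [translateVars, algebraMap_eq]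
  exact AlgHom.congr_fun h f

theorem constantCoeff_translateVars (f : MvPolynomial σ R) :
    constantCoeff (translateVars c f) = eval c f := by
  have h : (constantCoeff : MvPolynomial σ R →+* R).comp (translateVars c) = eval c := by
    refine ringHom_ext (fun a => ?_) fun i => ?_ <;> simp [translateVars, algebraMap_eq]
  exact RingHom.congr_fun h f

variable {c}

theorem translateVars_mem_idealOfVars_pow {n : ℕ} {f : MvPolynomial σ R}
    (hf : f ∈ RingHom.ker (aeval c : MvPolynomial σ R →ₐ[R] R) ^ n) :
    translateVars c f ∈ idealOfVars σ R ^ n := by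
  have hle : RingHom.ker (aeval c : MvPolynomial σ R →ₐ[R] R) ≤
      (idealOfVars σ R).comap (translateVars c) := fun f hf => by
    rw [Ideal.mem_comap, ← pow_one (idealOfVars σ R), mem_pow_idealOfVars_iff']
    intro m hm
    rw [Nat.lt_one_iff, Finsupp.degree_eq_zero_iff] at hm
    rw [hm, ← constantCoeff_eq, constantCoeff_translateVars, ← aeval_eq_eval]
    exact RingHom.mem_ker.mp hf
  exact Ideal.le_comap_pow _ n (Ideal.pow_right_mono hle n hf)

theorem eq_translateVars_neg_truncateLE_translateVars {n : ℕ} {f g : MvPolynomial σ R}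
    (hg : g.totalDegree ≤ n)
    (hfg : g - f ∈ RingHom.ker (aeval c : MvPolynomial σ R →ₐ[R] R) ^ (n + 1)) :
    g = translateVars (-c) (truncateLE n (translateVars c f)) := by
  have h := translateVars_mem_idealOfVars_pow hfg
  rw [map_sub] at h
  rw [← truncateLE_eq_of_sub_mem h,
    truncateLE_eq_self ((totalDegree_translateVars_le c g).trans hg),
    translateVars_neg_translateVars]

end Translation

section JuntaProducts

variable {σ τ R : Type*} [CommSemiring R] {v d d₁ d₂ s t : ℕ}

theorem card_vars_aeval_le {f : σ → MvPolynomial τ R} (hf : ∀ i, (f i).vars.card ≤ 1)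
    (p : MvPolynomial σ R) : (aeval f p).vars.card ≤ p.vars.card := by
  classical
  calc (aeval f p).vars.card ≤ (p.vars.biUnion fun i => (f i).vars).card :=
        Finset.card_le_card (vars_bind₁ f p)
    _ ≤ p.vars.card * 1 := Finset.card_biUnion_le_card_mul _ _ _ fun i _ => hf i
    _ = p.vars.card := mul_one _

theorem card_vars_C_mul_le (c : R) (f : MvPolynomial σ R) :
    (C c * f).vars.card ≤ f.vars.card := by
  classical
  exact Finset.card_le_card ((vars_mul _ _).trans (by rw [vars_C, Finset.empty_union]))

theorem card_vars_X_le (i : σ) : (X i : MvPolynomial σ R).vars.card ≤ 1 := by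
  cases subsingleton_or_nontrivial R
  · simp [Subsingleton.elim (X i : MvPolynomial σ R) 0]
  · rw [vars_X, Finset.card_singleton]

/-- A polynomial is a junta product if it is a product of `d` factors, each of which is a
`v`-junta, i.e. depends on at most `v` variables. -/
def IsJuntaProd (v d : ℕ) (f : MvPolynomial σ R) : Prop :=
  ∃ q : Fin d → MvPolynomial σ R, (∀ j, (q j).vars.card ≤ v) ∧ f = ∏ j, q j

/-- A polynomial is a junta product sum if it is a sum of `s` products of `d` factors, each of
which depends on at most `v` variables: the representations whose size is bounded in the theorem. -/
def IsJuntaProdSum (v d s : ℕ) (f : MvPolynomial σ R) : Prop :=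
  ∃ P : Fin s → MvPolynomial σ R, (∀ r, IsJuntaProd v d (P r)) ∧ f = ∑ r, P r

namespace IsJuntaProd

theorem one (v d : ℕ) : IsJuntaProd v d (1 : MvPolynomial σ R) :=
  ⟨fun _ => 1, fun _ => by simp, by simp⟩

theorem mul {f g : MvPolynomial σ R} (hf : IsJuntaProd v d₁ f) (hg : IsJuntaProd v d₂ g) :
    IsJuntaProd v (d₁ + d₂) (f * g) := by
  obtain ⟨q, hq, rfl⟩ := hf
  obtain ⟨q', hq', rfl⟩ := hg
  refine ⟨Fin.append q q', fun j => ?_, by simp [Fin.prod_univ_add]⟩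
  induction j using Fin.addCases <;> simp [hq, hq']

theorem multiset_prod {m : Multiset (MvPolynomial σ R)} (hm : ∀ f ∈ m, IsJuntaProd v d f) :
    IsJuntaProd v (m.card * d) m.prod := by
  induction m using Multiset.induction_on with
  | empty => simpa using one v 0
  | cons f m ih =>
    rw [Multiset.forall_mem_cons] at hm
    rw [Multiset.prod_cons, Multiset.card_cons, add_one_mul, add_comm]
    exact hm.1.mul (ih hm.2)

theorem smul {f : MvPolynomial σ R} (hd : d ≠ 0) (hf : IsJuntaProd v d f) (c : R) :
    IsJuntaProd v d (c • f) := by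
  obtain ⟨q, hq, rfl⟩ := hf
  obtain ⟨d, rfl⟩ := Nat.exists_eq_succ_of_ne_zero hd
  refine ⟨Fin.cons (C c * q 0) (Fin.tail q), fun j => ?_, ?_⟩
  · induction j using Fin.cases with
    | zero => exact (card_vars_C_mul_le _ _).trans (hq 0)
    | succ j => exact hq j.succ
  · simp [Fin.prod_univ_succ, Fin.tail, smul_eq_C_mul, mul_assoc]

theorem aeval {f : MvPolynomial σ R} (hf : IsJuntaProd v d f) {u : σ → MvPolynomial τ R}
    (hu : ∀ i, (u i).vars.card ≤ 1) : IsJuntaProd v d (MvPolynomial.aeval u f) := by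
  obtain ⟨q, hq, rfl⟩ := hf
  exact ⟨fun j => MvPolynomial.aeval u (q j), fun j => (card_vars_aeval_le hu _).trans (hq j),
    map_prod _ _ _⟩

end IsJuntaProd

theorem isJuntaProdSum_iff {f : MvPolynomial σ R} :
    IsJuntaProdSum v d s f ↔ ∃ Γ : Fin s → Fin d → MvPolynomial σ R,
      (∀ r j, (Γ r j).vars.card ≤ v) ∧ f = ∑ r, ∏ j, Γ r j := by
  refine ⟨fun ⟨P, hP, hf⟩ => ?_, fun ⟨Γ, hΓ, hf⟩ => ⟨_, fun r => ⟨Γ r, hΓ r, rfl⟩, hf⟩⟩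
  choose Γ hΓ hPΓ using hP
  exact ⟨Γ, hΓ, by simp only [hf, ← hPΓ]⟩

namespace IsJuntaProdSum

theorem of_mem_span {ι : Type*} [Fintype ι] {P : ι → MvPolynomial σ R} {f : MvPolynomial σ R}
    (hd : d ≠ 0) (hP : ∀ i, IsJuntaProd v d (P i)) (hf : f ∈ Submodule.span R (Set.range P)) :
    IsJuntaProdSum v d (Fintype.card ι) f := by
  obtain ⟨c, rfl⟩ := (Submodule.mem_span_range_iff_exists_fun R).mp hf
  let e := (Fintype.equivFin ι).symm
  exact ⟨fun r => c (e r) • P (e r), fun r => (hP _).smul hd _,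
    (e.sum_comp fun i => c i • P i).symm⟩

theorem sum {f : Fin t → MvPolynomial σ R} (hf : ∀ i, IsJuntaProdSum v d s (f i)) :
    IsJuntaProdSum v d (t * s) (∑ i, f i) := by
  choose P hP hfP using hf
  refine ⟨fun r => P (finProdFinEquiv.symm r).1 (finProdFinEquiv.symm r).2, fun r => hP _ _, ?_⟩
  rw [finProdFinEquiv.symm.sum_comp fun x => P x.1 x.2, Fintype.sum_prod_type]
  exact Finset.sum_congr rfl fun i _ => hfP i

theorem aeval {f : MvPolynomial σ R} (hf : IsJuntaProdSum v d s f) {u : σ → MvPolynomial τ R}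
    (hu : ∀ i, (u i).vars.card ≤ 1) : IsJuntaProdSum v d s (MvPolynomial.aeval u f) := by
  obtain ⟨P, hP, rfl⟩ := hf
  exact ⟨fun r => MvPolynomial.aeval u (P r), fun r => (hP r).aeval hu, map_sum _ _ _⟩

theorem translateVars {f : MvPolynomial σ R} (hf : IsJuntaProdSum v d s f) (c : σ → R) :
    IsJuntaProdSum v d s (_root_.translateVars c f) := by
  classical
  refine hf.aeval fun i => (Finset.card_le_card (vars_add_subset _ _)).trans ?_
  rw [vars_C, Finset.union_empty]
  exact card_vars_X_le i

theorem of_mem_span_pow {κ : Type*} [Fintype κ] {M : κ → MvPolynomial σ R} {n : ℕ}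
    {W : MvPolynomial σ R} (hd : d ≠ 0) (hn : n ≠ 0) (hM : ∀ o, IsJuntaProd v d (M o))
    (hW : W ∈ Submodule.span R (Set.range M) ^ n) :
    IsJuntaProdSum v (n * d) ((Fintype.card κ + n - 1).choose n) W := by
  classical
  rw [← Sym.card_sym_eq_choose (α := κ) n]
  refine of_mem_span (mul_ne_zero hn hd) (fun s => ?_) (span_range_pow_le_span_sym M n hW)
  have hprod : IsJuntaProd v (((s : Multiset κ).map M).card * d) ((s : Multiset κ).map M).prod :=
    .multiset_prod fun f hf => by
      obtain ⟨o, -, rfl⟩ := Multiset.mem_map.mp hf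
      exact hM o
  rwa [Multiset.card_map, Sym.card_coe] at hprod

end IsJuntaProdSum

section CharZero

variable {F : Type*} [Field F] [CharZero F] {f : MvPolynomial σ F}

theorem IsJuntaProd.truncateLE (hd : d ≠ 0) (hf : IsJuntaProd v d f) (n : ℕ) :
    IsJuntaProdSum v d (d * n + 1) (truncateLE n f) := by
  obtain ⟨q, hq, rfl⟩ := hf
  have hprod : IsJuntaProd v d (∏ j, _root_.truncateLE n (q j)) :=
    ⟨_, fun j => (Finset.card_le_card (vars_truncateLE_subset n _)).trans (hq j), rfl⟩
  have hdeg : (∏ j, _root_.truncateLE n (q j)).totalDegree < d * n + 1 :=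
    Nat.lt_succ_iff.mpr <| calc (∏ j, _root_.truncateLE n (q j)).totalDegree
      _ ≤ ∑ j, (_root_.truncateLE n (q j)).totalDegree := totalDegree_finsetProd _ _
      _ ≤ ∑ _j : Fin d, n := Finset.sum_le_sum fun j _ => totalDegree_truncateLE_le n (q j)
      _ = d * n := by simp
  rw [← truncateLE_prod_truncateLE, ← Fintype.card_fin (d * n + 1)]
  exact .of_mem_span hd
    (fun i => hprod.aeval fun s => (card_vars_C_mul_le _ _).trans (card_vars_X_le s))
    (truncateLE_mem_span_range_aeval n hdeg (natCast_fin_injective F _))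

theorem IsJuntaProdSum.truncateLE (hd : d ≠ 0) (hf : IsJuntaProdSum v d s f) (n : ℕ) :
    IsJuntaProdSum v d (s * (d * n + 1)) (truncateLE n f) := by
  obtain ⟨P, hP, rfl⟩ := hf
  rw [map_sum]
  exact .sum fun r => (hP r).truncateLE hd n

theorem isJuntaProdSum_of_isRoot {p : Polynomial (MvPolynomial σ F)} (hp : p ≠ 0) {k T a : ℕ}
    (hk : p.natDegree ≤ k) (hd : d ≠ 0) (ha : a ≠ 0)
    (heval : ∀ x : F, IsJuntaProdSum v d T (p.eval (C x))) {g : MvPolynomial σ F}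
    (hroot : p.IsRoot g) (hg : g.totalDegree ≤ a) :
    IsJuntaProdSum v (d * a) ((d * a ^ 2 + 1) * (T * (k + 1) + a).choose a) g := by
  obtain ⟨n, hqg, hqg'⟩ := exists_iterate_derivative_simple_root hp hroot
  obtain ⟨c, hc⟩ : ∃ c : σ → F,
      aeval c ((Polynomial.derivative^[n + 1] p).eval g) ≠ 0 := by
    by_contra! h
    exact hqg' (MvPolynomial.funext fun c => by simpa [coe_aeval_eq_eval] using h c)
  choose P hP hevalP using fun l : Fin (k + 1) => heval (l : ℕ)
  let M : Option (Fin T × Fin (k + 1)) → MvPolynomial σ F := fun o => o.elim 1 fun x => P x.2 x.1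
  have hM : ∀ o, IsJuntaProd v d (M o) := fun o => o.rec (.one v d) fun x => hP x.2 x.1
  let L := Submodule.span F (Set.range M)
  have hL : 1 ≤ L := Submodule.one_le.mpr (Submodule.subset_span ⟨none, rfl⟩)
  have hpL : ∀ i, p.coeff i ∈ L := fun i => by
    refine Submodule.span_le.mpr ?_ (coeff_mem_span_range_eval (Nat.lt_succ_iff.mpr hk)
      (natCast_fin_injective F (k + 1)) i)
    rintro _ ⟨l, rfl⟩
    change p.eval (C ((l : ℕ) : F)) ∈ L
    rw [hevalP]
    exact sum_mem fun r _ => Submodule.subset_span ⟨some (r, l), rfl⟩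
  have hqL : ∀ i, (Polynomial.derivative^[n] p).coeff i ∈ L := fun i => by
    rw [Polynomial.coeff_iterate_derivative]
    exact nsmul_mem (hpL _) _
  obtain ⟨W, hW, hgW⟩ := exists_mem_pow_sub_mem_ker_pow_of_isRoot (aeval c) hL hqL hqg
    (by rwa [Function.iterate_succ_apply'] at hc) a
  rw [eq_translateVars_neg_truncateLE_translateVars hg hgW]
  have hWsum := IsJuntaProdSum.of_mem_span_pow hd ha hM hW
  convert ((hWsum.translateVars c).truncateLE (mul_ne_zero ha hd) a).translateVars (-c) using 1
  · exact mul_comm d a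
  · simp only [Fintype.card_option, Fintype.card_prod, Fintype.card_fin]
    rw [add_right_comm, Nat.add_sub_cancel]
    ring

end CharZero

end JuntaProducts

section Univariate

variable {S F : Type*} [CommSemiring F]

/-- A polynomial in the variables `S` and one further variable, viewed as a univariate polynomial
in the latter. -/
noncomputable def toUnivariate :
    MvPolynomial (S ⊕ Unit) F ≃ₐ[F] Polynomial (MvPolynomial S F) :=
  (renameEquiv F (Equiv.optionEquivSumPUnit S).symm).trans (optionEquivLeft F S)

theorem natDegree_toUnivariate (P : MvPolynomial (S ⊕ Unit) F) :
    (toUnivariate P).natDegree = P.degreeOf (Sum.inr ()) := by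
  rw [toUnivariate, AlgEquiv.trans_apply, natDegree_optionEquivLeft, renameEquiv_apply,
    ← Equiv.optionEquivSumPUnit_symm_inr PUnit.unit,
    degreeOf_rename_of_injective (Equiv.injective _)]

theorem eval_toUnivariate (P : MvPolynomial (S ⊕ Unit) F) (g : MvPolynomial S F) :
    (toUnivariate P).eval g = aeval (Sum.elim X fun _ => g) P := by
  have h : (Polynomial.evalRingHom g).comp toUnivariate.toAlgHom.toRingHom =
      (aeval (R := F) (Sum.elim X fun _ => g)).toRingHom := by
    refine ringHom_ext (fun a => ?_) ?_
    · simp [toUnivariate, algebraMap_eq]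
    · rintro (i | ⟨⟩) <;> simp [toUnivariate]
  exact RingHom.congr_fun h P

theorem isRoot_toUnivariate_of_dvd {F : Type*} [CommRing F] {P : MvPolynomial (S ⊕ Unit) F}
    {g : MvPolynomial S F} (h : X (Sum.inr ()) - rename Sum.inl g ∣ P) :
    (toUnivariate P).IsRoot g := by
  obtain ⟨Q, rfl⟩ := h
  rw [Polynomial.IsRoot, eval_toUnivariate, map_mul, map_sub, aeval_X, aeval_rename,
    Sum.elim_inr, Sum.elim_comp_inl, aeval_X_left, AlgHom.id_apply, sub_self, zero_mul]

theorem IsJuntaProdSum.eval_toUnivariate_C {v d s : ℕ} {P : MvPolynomial (S ⊕ Unit) F}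
    (hP : IsJuntaProdSum v d s P) (x : F) :
    IsJuntaProdSum v d s ((toUnivariate P).eval (C x)) := by
  rw [eval_toUnivariate]
  refine hP.aeval ?_
  rintro (i | ⟨⟩)
  · exact card_vars_X_le i
  · simp

end Univariate

theorem stmt18_general {F S : Type*} [Field F] [CharZero F] {k T d v a : ℕ} (ha : a ≠ 0)
    {P : MvPolynomial (S ⊕ Unit) F} (hP₀ : P ≠ 0) (hk : P.degreeOf (Sum.inr ()) ≤ k)
    (hP : IsJuntaProdSum v d T P) {g : MvPolynomial S F} (hg : g.totalDegree ≤ a)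
    (hdvd : X (Sum.inr ()) - rename Sum.inl g ∣ P) :
    IsJuntaProdSum v (d * a) ((d * a ^ 2 + 1) * (T * (k + 1) + a).choose a) g := by
  have hroot := isRoot_toUnivariate_of_dvd hdvd
  have hd : d ≠ 0 := by
    rintro rfl
    obtain ⟨Γ, -, rfl⟩ := isJuntaProdSum_iff.mp hP
    have hT : (T : MvPolynomial S F) = 0 := by simpa [Polynomial.IsRoot] using hroot
    exact hP₀ (by simp [Nat.cast_eq_zero.mp hT])
  exact isJuntaProdSum_of_isRoot (toUnivariate.map_ne_zero_iff.mpr hP₀)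
    ((natDegree_toUnivariate P).trans_le hk) hd ha hP.eval_toUnivariate_C hroot hg

theorem add_choose_le_choose_mul_pow (k T a : ℕ) :
    (T * (k + 1) + a).choose a ≤
      (k + a + 1).choose (k + 1) * ((T * (k + 1) ^ 3 + a).choose a) ^ (k + 1) :=
  calc (T * (k + 1) + a).choose a
      ≤ (T * (k + 1) ^ 3 + a).choose a := Nat.choose_le_choose _ (by
        gcongr; exact Nat.le_self_pow (by norm_num) _)
    _ ≤ ((T * (k + 1) ^ 3 + a).choose a) ^ (k + 1) := Nat.le_self_pow k.succ_ne_zero _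
    _ ≤ _ := Nat.le_mul_of_pos_left _ (Nat.choose_pos (by omega))

/-- Let `P'` be a nonzero polynomial in the variables `{Y_j : j ∈ S} ∪ {X}`
of degree at most `k` in `X`, with `P' = ∑_{r=1}^T ∏_{j=1}^d Q'_{rj}` where each `Q'_{rj}`
depends on at most `v` variables. Let `g ∈ F[{Y_j : j ∈ S}]` be homogeneous of degree
`a' ≥ 1` with `X - g` dividing `P'`. Then `g = ∑_{r=1}^{I'} ∏_{j=1}^{d'} Γ_{rj}` with
`I' ≤ (d·a'² + 1)·binom(k+a'+1, k+1)·binom(T·(k+1)³ + a', a')^{k+1}`, `d' ≤ d·a'` and each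
`Γ_{rj}` depending on at most `v` variables. -/
theorem stmt18 (F : Type*) [Field F] [CharZero F]
    (S : Type*) [Fintype S] [DecidableEq S]
    (k T d v a' : ℕ) (ha' : 1 ≤ a')
    (P' : MvPolynomial (S ⊕ Unit) F) (hP0 : P' ≠ 0)
    (hdeg : P'.degreeOf (Sum.inr ()) ≤ k)
    (Q' : Fin T → Fin d → MvPolynomial (S ⊕ Unit) F)
    (hrep : P' = ∑ r, ∏ j, Q' r j)
    (hvars : ∀ r j, (Q' r j).vars.card ≤ v)
    (g : MvPolynomial S F) (hg : g.IsHomogeneous a')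
    (hdvd : (X (Sum.inr ()) - rename Sum.inl g) ∣ P') :
    ∃ I' d' : ℕ,
      I' ≤ (d * a' ^ 2 + 1) * (k + a' + 1).choose (k + 1) *
        ((T * (k + 1) ^ 3 + a').choose a') ^ (k + 1) ∧
      d' ≤ d * a' ∧
      ∃ Γ : Fin I' → Fin d' → MvPolynomial S F,
        (∀ r j, (Γ r j).vars.card ≤ v) ∧
        g = ∑ r, ∏ j, Γ r j := by
  obtain ⟨Γ, hΓ, hgΓ⟩ := isJuntaProdSum_iff.mp <| stmt18_general (Nat.one_le_iff_ne_zero.mp ha')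
    hP0 hdeg (isJuntaProdSum_iff.mpr ⟨Q', hvars, hrep⟩) hg.totalDegree_le hdvd
  refine ⟨_, _, ?_, le_rfl, Γ, hΓ, hgΓ⟩
  rw [mul_assoc]
  exact Nat.mul_le_mul_left _ (add_choose_le_choose_mul_pow k T a')
end
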